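/- arXiv:2206.07017 — 2 statements merged into one kernel-verified Lean document; each statement's English description precedes it below -/
import Mathlib

section
/- Let α be a countable ordinal, δ = ω^(α+1), X = [1, δ] with the order topology, G the group of homeomorphisms of X, A_n = [ω^α·(n−1)+1, ω^α·n] for n ≥ 1, π : G → Sym({1,2,…}) the homomorphism determined by π(g)(m) = n iff g(ω^α·m) = ω^α·n, and K* the kernel of π. Let g ∈ G be such that σ = π(g) acts on {1,2,…} as a single infinite cycle, and let f be any function assigning to each i ≥ 1 an ordered pair f(i) of bounded clopen subsets of [1, ω^α]. Then there exists h ∈ K* such that for every i ≥ 1, (P_i(h⁻¹gh), Q_i(h⁻¹gh)) ∼ f(i), where P_n(k) = A_{π(k)(n)} \ k(A_n) and Q_n(k) = A_n \ k⁻¹(A_{π(k)(n)}). -/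
open Ordinal Topology

noncomputable section

/-- The ordinal interval `[1, γ]`, i.e. the set of ordinals `β` with `1 ≤ β ≤ γ`, with the
subspace topology induced from the order topology on `Ordinal` (equivalently, its order
topology, since it is order-connected). -/
abbrev OrdIcc (γ : Ordinal) : Type _ := ↥(Set.Icc (1 : Ordinal) γ)

/-- `X = [1, δ]` where `δ = ω^(α+1)`. -/
abbrev Xsp (α : Ordinal) : Type _ := OrdIcc (omega0 ^ (α + 1))

lemma omega_pow_mul_mem (α : Ordinal) (m : ℕ+) :
    omega0 ^ α * ((m : ℕ) : Ordinal) ∈ Set.Icc (1 : Ordinal) (omega0 ^ (α + 1)) := by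
  constructor
  · have h1 : (1 : Ordinal) ≤ omega0 ^ α := Order.one_le_iff_pos.2 (opow_pos _ omega0_pos)
    have h2 : (1 : Ordinal) ≤ ((m : ℕ) : Ordinal) := by exact_mod_cast m.one_le
    calc (1 : Ordinal) = 1 * 1 := (one_mul 1).symm
      _ ≤ omega0 ^ α * ((m : ℕ) : Ordinal) := mul_le_mul' h1 h2
  · rw [Ordinal.add_one_eq_succ, Ordinal.opow_succ]
    exact mul_le_mul' le_rfl (Ordinal.nat_lt_omega0 m).le

/-- The point `ω^α·m` of `X` (for `m ≥ 1`). -/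
def pt (α : Ordinal) (m : ℕ+) : Xsp α :=
  ⟨omega0 ^ α * ((m : ℕ) : Ordinal), omega_pow_mul_mem α m⟩

/-- `A_n = [ω^α·(n−1)+1, ω^α·n]`, as a subset of `X`. -/
def Ablock (α : Ordinal) (n : ℕ+) : Set (Xsp α) :=
  {x : Xsp α | (x : Ordinal) ∈
    Set.Icc (omega0 ^ α * (((n : ℕ) - 1 : ℕ) : Ordinal) + 1) (omega0 ^ α * ((n : ℕ) : Ordinal))}

/-- The defining property of the homomorphism `π : G → Sym({1,2,…})`:
`π(g)(m) = n` iff `g(ω^α·m) = ω^α·n`. -/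
def IsBlockPerm (α : Ordinal) (π : (Xsp α ≃ₜ Xsp α) → Equiv.Perm ℕ+) : Prop :=
  ∀ (g : Xsp α ≃ₜ Xsp α) (m : ℕ+), g (pt α m) = pt α (π g m)

/-- `P_i(g) = A_{π(g)(i)} \ g(A_i)`. -/
def Pset (α : Ordinal) (π : (Xsp α ≃ₜ Xsp α) → Equiv.Perm ℕ+)
    (g : Xsp α ≃ₜ Xsp α) (i : ℕ+) : Set (Xsp α) :=
  Ablock α (π g i) \ (⇑g '' Ablock α i)

/-- `Q_i(g) = A_i \ g⁻¹(A_{π(g)(i)})`. -/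
def Qset (α : Ordinal) (π : (Xsp α ≃ₜ Xsp α) → Equiv.Perm ℕ+)
    (g : Xsp α ≃ₜ Xsp α) (i : ℕ+) : Set (Xsp α) :=
  Ablock α i \ (⇑g ⁻¹' Ablock α (π g i))

/-- `(P₁, Q₁) ∼ (P₂, Q₂)` iff the topological disjoint union `P₁ ⊔ Q₂` is homeomorphic
to `P₂ ⊔ Q₁`. -/
def PairSim (P₁ Q₁ P₂ Q₂ : Type*) [TopologicalSpace P₁] [TopologicalSpace Q₁]
    [TopologicalSpace P₂] [TopologicalSpace Q₂] : Prop :=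
  Nonempty ((P₁ ⊕ Q₂) ≃ₜ (P₂ ⊕ Q₁))

/-! A compact ordinal interval is determined up to homeomorphism by its top nonempty
Cantor–Bendixson derivative, which is finite: if that is the derivative of order `γ` and it has
`m` points, the space is homeomorphic to `[1, ω ^ γ * m]`. Hence `PairSim` for clopen sets reduces
to counting points of one rank `γ`.

Conjugating by `h ∈ K*` amounts to replacing the blocks `A_i` by the blocks `B_i = h(A_i)`. These
are chosen by exchanging small intervals between neighbouring `A_i`, and conversely every such
choice comes from some `h`, since `X` is the one-point compactification of the union of the blocks.
What has to be matched is the count of points of rank `γ` in `B_{σ i} \ g(B_i)` minus the count in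
`g(B_i) \ B_{σ i}`. This difference is an index, additive along chains of sets, so exchanging
intervals changes it by `c (σ i) - c i`, where `c i` is the net number of points gained by `B_i`.

If `α = β + 1`, take `γ = β`. As the orbits of `σ` are infinite, every prescribed change of the
index has the form `c (σ i) - c i`. Exchanging many further points in both directions, at a rapidly
growing rate, leaves `c` unchanged and ensures that the sets compared contain points of rank `β`.
If `α` is a limit, exchange equally many points upwards and downwards, of ranks `τ n` increasing
with the boundary `n`: at the rank `τ (max i (σ i))` nothing else is visible, so the index already
vanishes on both sides. -/

section

universe u

open Set CantorBendixson

/-! ### Cantor–Bendixson derivatives -/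

section CantorBendixson

variable {X Y : Type (u + 1)} [TopologicalSpace X] [TopologicalSpace Y] {γ : Ordinal.{u}}

/-- The Cantor–Bendixson derivative of order `γ` of the whole space. Mathlib indexes derived sets
of `X : Type (u + 1)` by ordinals of universe `u + 1`; the ordinals that are points of `OrdIcc δ`
and the exponents of `ω` live in universe `u`, hence the lift. -/
def cbDeriv (X : Type (u + 1)) [TopologicalSpace X] (γ : Ordinal.{u}) : Set X :=
  iteratedDerivedSet Set.univ (Ordinal.lift.{u + 1} γ)

lemma cbDeriv_antitone : Antitone (cbDeriv X) := fun _ _ h =>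
  iteratedDerivedSet_antitone univ (Ordinal.lift_le.2 h)

lemma isClosed_cbDeriv : IsClosed (cbDeriv X γ) :=
  isClosed_iteratedDerivedSet isClosed_univ _

@[simp]
lemma cbDeriv_zero : cbDeriv X 0 = Set.univ := by
  simp [cbDeriv]

lemma cbDeriv_add_one : cbDeriv X (γ + 1) = derivedSet (cbDeriv X γ) := by
  have h := isClosed_cbDeriv (X := X) (γ := γ)
  rw [← h.relDerivedSet_eq, cbDeriv, cbDeriv, Ordinal.lift_add, Ordinal.lift_one,
    iteratedDerivedSet_succ]

lemma mem_cbDeriv_of_isSuccLimit (hγ : Order.IsSuccLimit γ) {x : X} :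
    x ∈ cbDeriv X γ ↔ ∀ β < γ, x ∈ cbDeriv X β := by
  rw [cbDeriv, iteratedDerivedSet_limit (Ordinal.isSuccLimit_lift.2 hγ)]
  simp only [mem_iInter, Subtype.forall, mem_Iio]
  refine ⟨fun h β hβ => h _ (Ordinal.lift_lt.2 hβ), fun h β hβ => ?_⟩
  obtain ⟨β, hβγ, rfl⟩ := Ordinal.lt_lift_iff.1 hβ
  exact h β hβγ

lemma preimage_cbDeriv_of_isOpenEmbedding {e : X → Y} (he : IsOpenEmbedding e) :
    e ⁻¹' cbDeriv Y γ = cbDeriv X γ := by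
  induction γ using Ordinal.limitRecOn with
  | zero => simp
  | add_one γ ih =>
    ext x
    rw [mem_preimage, cbDeriv_add_one, cbDeriv_add_one, mem_derivedSet, mem_derivedSet, ← ih,
      ← Filter.comap_principal]
    exact he.accPt_comap_iff.symm
  | limit γ hγ ih =>
    ext x
    rw [mem_preimage, mem_cbDeriv_of_isSuccLimit hγ, mem_cbDeriv_of_isSuccLimit hγ]
    exact forall₂_congr fun β hβ => Set.ext_iff.1 (ih β hβ) x

lemma image_cbDeriv_of_homeomorph (e : X ≃ₜ Y) : e '' cbDeriv X γ = cbDeriv Y γ := by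
  rw [← preimage_cbDeriv_of_isOpenEmbedding e.isOpenEmbedding, image_preimage_eq _ e.surjective]

lemma inter_cbDeriv_finite [CompactSpace X] {E : Set X} (hE : IsClosed E)
    (h : E ∩ cbDeriv X (γ + 1) = ∅) : (E ∩ cbDeriv X γ).Finite := by
  by_contra hinf
  obtain ⟨x, hx, hacc⟩ :=
    Set.Infinite.exists_accPt_of_subset_isCompact hinf hE.isCompact inter_subset_left
  have hx' : x ∈ cbDeriv X (γ + 1) := by
    rw [cbDeriv_add_one]
    exact hacc.mono (Filter.principal_mono.2 inter_subset_right)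
  exact h.subset ⟨hx, hx'⟩

lemma exists_lt_inter_cbDeriv_eq_empty [CompactSpace X] (hγ : Order.IsSuccLimit γ) {E : Set X}
    (hE : IsClosed E) (h : E ∩ cbDeriv X γ = ∅) : ∃ β < γ, E ∩ cbDeriv X β = ∅ := by
  have : Nonempty (Iio γ) := ⟨⟨0, hγ.bot_lt⟩⟩
  obtain ⟨⟨β, hβ⟩, hEβ⟩ := hE.isCompact.elim_directed_family_closed
    (fun β : Iio γ => cbDeriv X β) (fun _ => isClosed_cbDeriv) (by
      rw [← h]; congr 1; ext x; simp [mem_cbDeriv_of_isSuccLimit hγ])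
    (directed_of_isDirected_le fun _ _ h => cbDeriv_antitone h)
  exact ⟨β, hβ, hEβ⟩

end CantorBendixson

section Ordinal

variable {a b x z β γ : Ordinal.{u}}

lemma accPt_setOf_omega0_opow_dvd_iff (hx : x ≠ 0) :
    AccPt x (Filter.principal {y | ω ^ β ∣ y}) ↔ ω ^ (β + 1) ∣ x := by
  have hpos : 0 < ω ^ β := opow_pos β omega0_pos
  rw [SuccOrder.accPt_principal]
  constructor
  · rintro ⟨-, h⟩
    have hdvd : ω ^ β ∣ x := by
      by_contra hndvd
      have hlt : ω ^ β * (x / ω ^ β) < x :=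
        (mul_div_le x _).lt_of_ne fun h => hndvd (Dvd.intro _ h)
      obtain ⟨_, ⟨k, rfl⟩, hk, hkx⟩ := h _ hlt
      exact (lt_of_mul_lt_mul_left' hk).not_ge ((mul_le_iff_le_div hpos.ne').1 hkx.le)
    obtain ⟨q, rfl⟩ := hdvd
    rw [opow_add, opow_one]
    refine mul_dvd_mul_left _ (isSuccPrelimit_iff_omega0_dvd.1 fun k hk => ?_)
    obtain ⟨_, ⟨m, rfl⟩, hkm, hmq⟩ := h _ ((mul_lt_mul_iff_right₀ hpos).2 hk.lt)
    exact hk.2 (lt_of_mul_lt_mul_left' hkm) (lt_of_mul_lt_mul_left' hmq)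
  · rintro ⟨k, hk⟩
    refine ⟨fun hmin => hx (isMin_iff_eq_bot.1 hmin), fun l hl => ?_⟩
    rw [opow_add, opow_one, mul_assoc] at hk
    have hk0 : k ≠ 0 := by rintro rfl; exact hx (by simpa using hk)
    obtain ⟨c, hc, hlc⟩ := (lt_mul_iff_of_isSuccLimit
      (isSuccLimit_mul_left isSuccLimit_omega0 (pos_iff_ne_zero.2 hk0))).1 (hk ▸ hl)
    exact ⟨ω ^ β * c, Dvd.intro _ rfl, hlc, hk ▸ (mul_lt_mul_iff_right₀ hpos).2 hc⟩

lemma omega0_opow_dvd_of_isSuccLimit (hγ : Order.IsSuccLimit γ) (h : ∀ β < γ, ω ^ β ∣ x) :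
    ω ^ γ ∣ x := by
  have hdm := div_add_mod x (ω ^ γ)
  obtain ⟨β, hβ, hlt⟩ := (lt_opow_of_isSuccLimit omega0_ne_zero hγ).1
    (mod_lt x (opow_pos γ omega0_pos).ne')
  have hdvd := h β hβ
  rw [← hdm, dvd_add_iff (Dvd.dvd.mul_right (opow_dvd_opow _ hβ.le) _)] at hdvd
  have hmod : x % ω ^ γ = 0 := by
    by_contra h0
    exact hlt.not_ge (le_of_dvd h0 hdvd)
  exact dvd_of_mod_eq_zero hmod

lemma mem_cbDeriv_ordinal (hx : x ≠ 0) : x ∈ cbDeriv Ordinal.{u} γ ↔ ω ^ γ ∣ x := by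
  induction γ using Ordinal.limitRecOn generalizing x with
  | zero => simp
  | add_one γ ih =>
    rw [cbDeriv_add_one, mem_derivedSet, ← accPt_setOf_omega0_opow_dvd_iff hx,
      SuccOrder.accPt_principal, SuccOrder.accPt_principal]
    refine and_congr_right fun _ => forall₂_congr fun b _ => ?_
    refine exists_congr fun y => and_congr_left fun hy => ih (pos_of_gt hy.1).ne'
  | limit γ hγ ih =>
    rw [mem_cbDeriv_of_isSuccLimit hγ, forall₂_congr fun β hβ => ih β hβ hx]
    exact ⟨omega0_opow_dvd_of_isSuccLimit hγ, fun h β hβ => (opow_dvd_opow _ hβ.le).trans h⟩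

lemma OrdIcc.ne_zero (x : OrdIcc z) : (x : Ordinal) ≠ 0 :=
  (Order.one_le_iff_pos.1 x.2.1).ne'

instance : CompactSpace (OrdIcc z) := isCompact_iff_compactSpace.1 isCompact_Icc

lemma Icc_one_eq_Ioc_zero : Set.Icc 1 z = Set.Ioc 0 z := by
  ext x
  simp only [mem_Icc, mem_Ioc, Order.one_le_iff_pos]

lemma isClopen_Ioc_ordinal : IsClopen (Set.Ioc a b) := by
  refine ⟨?_, ?_⟩
  · rw [← Order.Icc_succ_left]
    exact isClosed_Icc
  · rw [← Ioi_inter_Iic, ← Order.Iio_succ]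
    exact isOpen_Ioi.inter isOpen_Iio

lemma OrdIcc.isOpenEmbedding_val : IsOpenEmbedding (Subtype.val : OrdIcc z → Ordinal) :=
  (Icc_one_eq_Ioc_zero ▸ isClopen_Ioc_ordinal.isOpen :
    IsOpen (Set.Icc 1 z)).isOpenEmbedding_subtypeVal

lemma mem_cbDeriv_OrdIcc {x : OrdIcc z} : x ∈ cbDeriv (OrdIcc z) γ ↔ ω ^ γ ∣ (x : Ordinal) := by
  rw [← preimage_cbDeriv_of_isOpenEmbedding OrdIcc.isOpenEmbedding_val, mem_preimage,
    mem_cbDeriv_ordinal x.ne_zero]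

lemma cbDeriv_OrdIcc_eq_empty_iff : cbDeriv (OrdIcc z) γ = ∅ ↔ z < ω ^ γ := by
  refine ⟨fun h => not_le.1 fun hle => ?_, fun h => eq_empty_of_forall_notMem fun x hx => ?_⟩
  · have hmem : (⟨ω ^ γ, Order.one_le_iff_pos.2 (opow_pos γ omega0_pos), hle⟩ : OrdIcc z) ∈
        cbDeriv (OrdIcc z) γ := mem_cbDeriv_OrdIcc.2 dvd_rfl
    exact h.subset hmem
  · exact (le_of_dvd x.ne_zero (mem_cbDeriv_OrdIcc.1 hx)).not_gt (x.2.2.trans_lt h)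

end Ordinal

/-! ### Spaces homeomorphic to an ordinal interval -/

section Interval

variable {X Y Z : Type (u + 1)} [TopologicalSpace X] [TopologicalSpace Y] [TopologicalSpace Z]
variable {a b z γ : Ordinal.{u}}

/-- The disjoint union of two disjoint open sets, seen as a topological sum. -/
def unionHomeomorph {E F : Set X} (hE : IsOpen E) (hF : IsOpen F) (h : Disjoint E F) :
    E ⊕ F ≃ₜ ↥(E ∪ F) :=
  (hE.isOpenEmbedding_subtypeVal.sumElim hF.isOpenEmbedding_subtypeVal
    (Subtype.val_injective.sumElim Subtype.val_injective fun x y =>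
      h.ne_of_mem x.2 y.2)).isEmbedding.toHomeomorph.trans
    (Homeomorph.setCongr (by rw [Sum.elim_range, Subtype.range_val, Subtype.range_val]))

/-- `Y` is homeomorphic to `[1, z]` for some ordinal `z` (possibly `0`, when `Y` is empty). -/
def IsOrdIcc (Y : Type (u + 1)) [TopologicalSpace Y] : Prop :=
  ∃ z : Ordinal.{u}, Nonempty (Y ≃ₜ OrdIcc z)

lemma IsOrdIcc.of_homeomorph (hY : IsOrdIcc Y) (e : Y ≃ₜ Z) : IsOrdIcc Z :=
  let ⟨z, ⟨f⟩⟩ := hY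
  ⟨z, ⟨e.symm.trans f⟩⟩

lemma nonempty_homeomorph_Ioc_add (a b : Ordinal.{u}) :
    Nonempty (OrdIcc b ≃ₜ Set.Ioc a (a + b)) := by
  let shift : OrdIcc b → Set.Ioc a (a + b) := fun y =>
    ⟨a + y, lt_add_of_pos_right a (Order.one_le_iff_pos.1 y.2.1), by gcongr; exact y.2.2⟩
  have hcont : Continuous shift :=
    ((isNormal_add_right a).continuous.comp continuous_subtype_val).subtype_mk _
  have hinj : Function.Injective shift := fun x y h =>
    Subtype.ext (add_left_cancel (congrArg Subtype.val h :))
  have hsurj : Function.Surjective shift := by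
    rintro ⟨y, hay, hyb⟩
    exact ⟨⟨y - a, Order.one_le_iff_pos.2 (pos_iff_ne_zero.2 (Ordinal.sub_ne_zero_iff_lt.2 hay)),
      Ordinal.sub_le.2 hyb⟩, Subtype.ext (Ordinal.add_sub_cancel_of_le hay.le)⟩
  exact ⟨(isHomeomorph_iff_continuous_bijective.2 ⟨hcont, hinj, hsurj⟩).homeomorph⟩

lemma isOrdIcc_Ioc : IsOrdIcc ↥(Set.Ioc a b) := by
  rcases le_total a b with h | h
  · obtain ⟨e⟩ := nonempty_homeomorph_Ioc_add a (b - a)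
    rw [Ordinal.add_sub_cancel_of_le h] at e
    exact ⟨b - a, ⟨e.symm⟩⟩
  · have : IsEmpty ↥(Set.Ioc a b) := by rw [Ioc_eq_empty h.not_gt]; infer_instance
    have : IsEmpty (OrdIcc (0 : Ordinal.{u})) := ⟨fun x => x.ne_zero (nonpos_iff_eq_zero.1 x.2.2)⟩
    exact ⟨0, ⟨Homeomorph.empty⟩⟩

lemma nonempty_homeomorph_OrdIcc_add (a b : Ordinal.{u}) :
    Nonempty (OrdIcc a ⊕ OrdIcc b ≃ₜ OrdIcc (a + b)) := by
  obtain ⟨e⟩ := nonempty_homeomorph_Ioc_add a b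
  refine ⟨((Homeomorph.setCongr Icc_one_eq_Ioc_zero).sumCongr e).trans <|
    (unionHomeomorph isClopen_Ioc_ordinal.isOpen isClopen_Ioc_ordinal.isOpen
      (Ioc_disjoint_Ioc_of_le le_rfl)).trans (Homeomorph.setCongr ?_)⟩
  rw [Ioc_union_Ioc_eq_Ioc zero_le le_self_add, Icc_one_eq_Ioc_zero]

lemma IsOrdIcc.sum (hY : IsOrdIcc Y) (hZ : IsOrdIcc Z) : IsOrdIcc (Y ⊕ Z) := by
  obtain ⟨y, ⟨e⟩⟩ := hY
  obtain ⟨z, ⟨f⟩⟩ := hZ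
  obtain ⟨s⟩ := nonempty_homeomorph_OrdIcc_add y z
  exact ⟨y + z, ⟨(e.sumCongr f).trans s⟩⟩

lemma IsOrdIcc.union {E F : Set X} (hE : IsOpen E) (hF : IsOpen F) (h : Disjoint E F)
    (hE' : IsOrdIcc E) (hF' : IsOrdIcc F) : IsOrdIcc ↥(E ∪ F) :=
  (hE'.sum hF').of_homeomorph (unionHomeomorph hE hF h)

/-- Peel off a top segment contained in the clopen set or in its complement. -/
lemma isOrdIcc_of_isClopen_ordinal {C : Set Ordinal.{u}} (hC : IsClopen C)
    (h : C ⊆ Set.Ioc 0 z) : IsOrdIcc C := by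
  induction z using WellFoundedLT.induction generalizing C with
  | ind z ih =>
    rcases eq_or_ne z 0 with rfl | hz
    · obtain rfl : C = Set.Ioc 0 0 := by simpa using h
      exact isOrdIcc_Ioc
    have below : ∀ l < z, IsOrdIcc ↥(C ∩ Set.Ioc 0 l) := fun l hl =>
      ih l hl (hC.inter isClopen_Ioc_ordinal) inter_subset_right
    by_cases hzC : z ∈ C
    · obtain ⟨l, hl, hlC⟩ := exists_Ioc_subset_of_mem_nhds (hC.isOpen.mem_nhds hzC)
        ⟨0, pos_iff_ne_zero.2 hz⟩
      have hdisj : Disjoint (C ∩ Set.Ioc 0 l) (Set.Ioc l z) :=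
        (Ioc_disjoint_Ioc_of_le le_rfl).mono_left inter_subset_right
      have hunion : C ∩ Set.Ioc 0 l ∪ Set.Ioc l z = C := by
        rw [← inter_eq_right.2 hlC, ← inter_union_distrib_left,
          Ioc_union_Ioc_eq_Ioc zero_le hl.le, inter_eq_left.2 h]
      exact hunion ▸ (below l hl).union (hC.isOpen.inter isClopen_Ioc_ordinal.isOpen)
        isClopen_Ioc_ordinal.isOpen hdisj isOrdIcc_Ioc
    · obtain ⟨l, hl, hlC⟩ := exists_Ioc_subset_of_mem_nhds (hC.compl.isOpen.mem_nhds hzC)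
        ⟨0, pos_iff_ne_zero.2 hz⟩
      have hCl : C ∩ Set.Ioc 0 l = C := inter_eq_left.2 fun x hx =>
        ⟨(h hx).1, not_lt.1 fun hlx => hlC ⟨hlx, (h hx).2⟩ hx⟩
      exact hCl ▸ below l hl

lemma isOrdIcc_of_isClopen {C : Set (OrdIcc z)} (hC : IsClopen C) : IsOrdIcc C := by
  have hemb : IsClosedEmbedding (Subtype.val : OrdIcc z → Ordinal) :=
    isClosed_Icc.isClosedEmbedding_subtypeVal
  have hclopen : IsClopen (Subtype.val '' C) :=
    ⟨hemb.isClosedMap _ hC.isClosed, OrdIcc.isOpenEmbedding_val.isOpenMap _ hC.isOpen⟩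
  have hsub : Subtype.val '' C ⊆ Set.Ioc 0 z := by
    rintro _ ⟨x, -, rfl⟩
    exact Icc_one_eq_Ioc_zero ▸ x.2
  exact (isOrdIcc_of_isClopen_ordinal hclopen hsub).of_homeomorph
    (hemb.isEmbedding.homeomorphImage C).symm

lemma ncard_cbDeriv_opow_mul (γ : Ordinal.{u}) (m : ℕ) :
    (cbDeriv (OrdIcc (ω ^ γ * m)) γ).ncard = m := by
  have hpos : 0 < ω ^ γ := opow_pos γ omega0_pos
  have hinj : Function.Injective fun k : ℕ => ω ^ γ * (k : Ordinal.{u}) := fun k l h =>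
    Nat.cast_injective (mul_left_cancel₀ hpos.ne' h)
  have himage : Subtype.val '' cbDeriv (OrdIcc (ω ^ γ * m)) γ =
      (fun k : ℕ => ω ^ γ * (k : Ordinal.{u})) '' Set.Icc 1 m := by
    ext x
    simp only [mem_image, mem_cbDeriv_OrdIcc, Subtype.exists, exists_and_right, exists_eq_right,
      mem_Icc]
    constructor
    · rintro ⟨⟨hx, hxm⟩, k, rfl⟩
      have hkm := (mul_le_mul_iff_right₀ hpos).1 hxm
      obtain ⟨n, rfl⟩ := lt_omega0.1 (hkm.trans_lt (natCast_lt_omega0 m))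
      refine ⟨n, ⟨Nat.one_le_iff_ne_zero.2 ?_, by exact_mod_cast hkm⟩, rfl⟩
      rintro rfl
      simp at hx
    · rintro ⟨k, ⟨hk, hkm⟩, rfl⟩
      refine ⟨⟨Order.one_le_iff_pos.2 (mul_pos hpos (by exact_mod_cast hk)), ?_⟩, dvd_mul_right _ _⟩
      gcongr
  rw [← Set.ncard_image_of_injective _ Subtype.val_injective, himage,
    Set.ncard_image_of_injective _ hinj]
  simp [Set.ncard_eq_toFinset_card']

/-- The remainder `z % ω ^ γ` is absorbed when moved to the front. -/
lemma exists_homeomorph_OrdIcc_opow_mul (hz : z < ω ^ (γ + 1)) (hγz : ω ^ γ ≤ z) :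
    ∃ m : ℕ, Nonempty (OrdIcc z ≃ₜ OrdIcc (ω ^ γ * m)) := by
  have hpos : 0 < ω ^ γ := opow_pos γ omega0_pos
  rw [opow_add, opow_one, lt_mul_iff_div_lt hpos.ne'] at hz
  obtain ⟨m, hm⟩ := lt_omega0.1 hz
  have hdm := div_add_mod z (ω ^ γ)
  rw [hm] at hdm
  have hle : ω ^ γ ≤ ω ^ γ * m := by
    rw [← hm]
    exact le_mul_of_one_le_right' ((mul_le_iff_le_div hpos.ne').1 (by rwa [mul_one]))
  obtain ⟨e⟩ := nonempty_homeomorph_OrdIcc_add (ω ^ γ * m) (z % ω ^ γ)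
  obtain ⟨f⟩ := nonempty_homeomorph_OrdIcc_add (z % ω ^ γ) (ω ^ γ * m)
  rw [hdm] at e
  rw [add_of_omega0_opow_le (mod_lt z hpos.ne') hle] at f
  exact ⟨m, ⟨(e.symm.trans (Homeomorph.sumComm _ _)).trans f⟩⟩

lemma IsOrdIcc.exists_homeomorph (hY : IsOrdIcc Y) (h : cbDeriv Y (γ + 1) = ∅)
    (hne : (cbDeriv Y γ).Nonempty) :
    Nonempty (Y ≃ₜ OrdIcc (ω ^ γ * ((cbDeriv Y γ).ncard : Ordinal.{u}))) := by
  obtain ⟨z, ⟨e⟩⟩ := hY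
  rw [← image_cbDeriv_of_homeomorph e.symm, image_eq_empty, cbDeriv_OrdIcc_eq_empty_iff] at h
  rw [← image_cbDeriv_of_homeomorph e.symm, image_nonempty, nonempty_iff_ne_empty, Ne,
    cbDeriv_OrdIcc_eq_empty_iff, not_lt] at hne
  obtain ⟨m, ⟨f⟩⟩ := exists_homeomorph_OrdIcc_opow_mul h hne
  have hm : (cbDeriv Y γ).ncard = m := by
    rw [← ncard_cbDeriv_opow_mul γ m, ← image_cbDeriv_of_homeomorph (e.trans f),
      Set.ncard_image_of_injective _ (e.trans f).injective]
  exact ⟨hm ▸ e.trans f⟩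

lemma IsOrdIcc.nonempty_homeomorph (hY : IsOrdIcc Y) (hZ : IsOrdIcc Z)
    (hY' : cbDeriv Y (γ + 1) = ∅) (hZ' : cbDeriv Z (γ + 1) = ∅)
    (hpos : 0 < (cbDeriv Y γ).ncard) (h : (cbDeriv Y γ).ncard = (cbDeriv Z γ).ncard) :
    Nonempty (Y ≃ₜ Z) := by
  obtain ⟨e⟩ := hY.exists_homeomorph hY' (Set.nonempty_of_ncard_ne_zero hpos.ne')
  obtain ⟨f⟩ := hZ.exists_homeomorph hZ' (Set.nonempty_of_ncard_ne_zero (h ▸ hpos).ne')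
  exact ⟨e.trans ((h ▸ f).symm)⟩

end Interval

/-! ### Counting points of maximal rank -/

section Count

variable {X Y Z : Type (u + 1)} [TopologicalSpace X] [TopologicalSpace Y] [TopologicalSpace Z]
variable {γ : Ordinal.{u}} {E F : Set X}

lemma image_val_cbDeriv (hE : IsOpen E) : Subtype.val '' cbDeriv E γ = E ∩ cbDeriv X γ := by
  rw [← preimage_cbDeriv_of_isOpenEmbedding hE.isOpenEmbedding_subtypeVal,
    Subtype.image_preimage_coe]

lemma image_inter_cbDeriv (g : X ≃ₜ X) (E : Set X) :
    g '' E ∩ cbDeriv X γ = g '' (E ∩ cbDeriv X γ) := by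
  rw [image_inter g.injective, image_cbDeriv_of_homeomorph]

lemma cbDeriv_sum :
    cbDeriv (Y ⊕ Z) γ = Sum.inl '' cbDeriv Y γ ∪ Sum.inr '' cbDeriv Z γ := by
  rw [← preimage_cbDeriv_of_isOpenEmbedding (IsOpenEmbedding.inl (X := Y) (Y := Z)),
    ← preimage_cbDeriv_of_isOpenEmbedding (IsOpenEmbedding.inr (X := Y) (Y := Z)),
    image_preimage_inl_union_image_preimage_inr]

lemma ncard_cbDeriv_sum (hY : (cbDeriv Y γ).Finite) (hZ : (cbDeriv Z γ).Finite) :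
    (cbDeriv (Y ⊕ Z) γ).ncard = (cbDeriv Y γ).ncard + (cbDeriv Z γ).ncard := by
  have hdisj : Disjoint (Sum.inl '' cbDeriv Y γ) (Sum.inr '' cbDeriv Z γ) :=
    disjoint_image_inl_image_inr
  rw [cbDeriv_sum, Set.ncard_union_eq hdisj (hY.image _) (hZ.image _),
    Set.ncard_image_of_injective _ Sum.inl_injective,
    Set.ncard_image_of_injective _ Sum.inr_injective]

/-- The number of points of `E` of Cantor–Bendixson rank at least `γ`. It is only meaningful when
this number is finite, e.g. when the clopen set `E` has no point of rank above `γ`. -/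
def cbCount (γ : Ordinal.{u}) (E : Set X) : ℕ :=
  (E ∩ cbDeriv X γ).ncard

lemma cbCount_image (g : X ≃ₜ X) (E : Set X) : cbCount γ (g '' E) = cbCount γ E := by
  rw [cbCount, image_inter_cbDeriv, Set.ncard_image_of_injective _ g.injective, cbCount]

lemma cbCount_eq_zero (h : E ∩ cbDeriv X γ = ∅) : cbCount γ E = 0 :=
  (Set.ncard_eq_zero (h ▸ Set.finite_empty)).2 h

/-- The excess of `E` over `F` in points of rank `γ`, for sets with the same points of rank above
`γ`; it is the analogue of an index and is additive along chains of such sets. -/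
def cbIndex (γ : Ordinal.{u}) (E F : Set X) : ℤ :=
  cbCount γ (E \ F) - cbCount γ (F \ E)

lemma cbIndex_image (g : X ≃ₜ X) (E F : Set X) :
    cbIndex γ (g '' E) (g '' F) = cbIndex γ E F := by
  simp only [cbIndex, ← Set.image_sdiff g.injective, cbCount_image]

lemma ncard_cbDeriv_coe (hE : IsOpen E) : (cbDeriv E γ).ncard = cbCount γ E := by
  rw [cbCount, ← image_val_cbDeriv hE, Set.ncard_image_of_injective _ Subtype.val_injective]

lemma cbDeriv_coe_eq_empty_iff (hE : IsOpen E) : cbDeriv E γ = ∅ ↔ E ∩ cbDeriv X γ = ∅ := by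
  rw [← image_val_cbDeriv hE, image_eq_empty]

lemma cbDeriv_coe_finite [CompactSpace X] (hE : IsClopen E) (h : E ∩ cbDeriv X (γ + 1) = ∅) :
    (cbDeriv E γ).Finite := by
  rw [← Set.finite_image_iff Subtype.val_injective.injOn, image_val_cbDeriv hE.isOpen]
  exact inter_cbDeriv_finite hE.isClosed h

lemma diff_inter_cbDeriv_eq_empty (h : E ∩ cbDeriv X γ = F ∩ cbDeriv X γ) :
    (E \ F) ∩ cbDeriv X γ = ∅ := by
  rw [eq_empty_iff_forall_notMem]
  rintro x ⟨⟨hxE, hxF⟩, hx⟩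
  exact hxF (h.subset ⟨hxE, hx⟩).1

lemma inter_cbDeriv_eq_of_diff (hEF : (E \ F) ∩ cbDeriv X γ = ∅)
    (hFE : (F \ E) ∩ cbDeriv X γ = ∅) : E ∩ cbDeriv X γ = F ∩ cbDeriv X γ := by
  ext x
  exact ⟨fun hx => ⟨by_contra fun hxF => hEF.subset ⟨⟨hx.1, hxF⟩, hx.2⟩, hx.2⟩,
    fun hx => ⟨by_contra fun hxE => hFE.subset ⟨⟨hx.1, hxE⟩, hx.2⟩, hx.2⟩⟩

lemma pairSim_of_cbCount {δ ε : Ordinal.{u}} {P Q : Set (OrdIcc δ)} {F₁ F₂ : Set (OrdIcc ε)}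
    (hP : IsClopen P) (hQ : IsClopen Q) (hF₁ : IsClopen F₁) (hF₂ : IsClopen F₂)
    (hP' : P ∩ cbDeriv (OrdIcc δ) (γ + 1) = ∅) (hQ' : Q ∩ cbDeriv (OrdIcc δ) (γ + 1) = ∅)
    (hF₁' : F₁ ∩ cbDeriv (OrdIcc ε) (γ + 1) = ∅) (hF₂' : F₂ ∩ cbDeriv (OrdIcc ε) (γ + 1) = ∅)
    (hcount : cbCount γ P + cbCount γ F₂ = cbCount γ F₁ + cbCount γ Q)
    (hpos : 0 < cbCount γ P ∨ 0 < cbCount γ Q) : PairSim P Q F₁ F₂ := by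
  have empty_sum : ∀ {A : Set (OrdIcc δ)} {B : Set (OrdIcc ε)}, IsClopen A → IsClopen B →
      A ∩ cbDeriv _ (γ + 1) = ∅ → B ∩ cbDeriv _ (γ + 1) = ∅ →
      cbDeriv (A ⊕ B) (γ + 1) = ∅ := by
    intro A B hA hB hA' hB'
    rw [cbDeriv_sum, (cbDeriv_coe_eq_empty_iff hA.isOpen).2 hA',
      (cbDeriv_coe_eq_empty_iff hB.isOpen).2 hB']
    simp
  have ncard_sum : ∀ {A : Set (OrdIcc δ)} {B : Set (OrdIcc ε)}, IsClopen A → IsClopen B →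
      A ∩ cbDeriv _ (γ + 1) = ∅ → B ∩ cbDeriv _ (γ + 1) = ∅ →
      (cbDeriv (A ⊕ B) γ).ncard = cbCount γ A + cbCount γ B := by
    intro A B hA hB hA' hB'
    rw [ncard_cbDeriv_sum (cbDeriv_coe_finite hA hA') (cbDeriv_coe_finite hB hB'),
      ncard_cbDeriv_coe hA.isOpen, ncard_cbDeriv_coe hB.isOpen]
  have hPF₂ := ncard_sum hP hF₂ hP' hF₂'
  have hQF₁ := ncard_sum hQ hF₁ hQ' hF₁'
  obtain ⟨e⟩ := ((isOrdIcc_of_isClopen hP).sum (isOrdIcc_of_isClopen hF₂)).nonempty_homeomorph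
    ((isOrdIcc_of_isClopen hQ).sum (isOrdIcc_of_isClopen hF₁)) (empty_sum hP hF₂ hP' hF₂')
    (empty_sum hQ hF₁ hQ' hF₁') (by omega) (by omega)
  exact ⟨e.trans (Homeomorph.sumComm _ _)⟩

end Count

section Index

variable {X : Type (u + 1)} [TopologicalSpace X] [CompactSpace X] {γ : Ordinal.{u}}
  {E F G : Set X}

lemma cbCount_union (hE : IsClosed E) (hF : IsClosed F) (hEF : Disjoint E F)
    (hE' : E ∩ cbDeriv X (γ + 1) = ∅) (hF' : F ∩ cbDeriv X (γ + 1) = ∅) :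
    cbCount γ (E ∪ F) = cbCount γ E + cbCount γ F := by
  rw [cbCount, union_inter_distrib_right,
    Set.ncard_union_eq (hEF.mono inter_subset_left inter_subset_left)
      (inter_cbDeriv_finite hE hE') (inter_cbDeriv_finite hF hF'), cbCount, cbCount]

lemma cbCount_diff_eq (hE : IsClopen E) (hF : IsClopen F)
    (hEF : E ∩ cbDeriv X (γ + 1) = F ∩ cbDeriv X (γ + 1)) (G : Set X) :
    cbCount γ (E \ F) = cbCount γ (E \ (F ∪ G)) + cbCount γ ((E ∩ G) \ F) := by
  have hfin := inter_cbDeriv_finite (hE.diff hF).isClosed (diff_inter_cbDeriv_eq_empty hEF)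
  have hdisj : Disjoint (E \ (F ∪ G) ∩ cbDeriv X γ) ((E ∩ G) \ F ∩ cbDeriv X γ) := by
    rw [Set.disjoint_left]
    grind
  rw [cbCount, cbCount, cbCount, ← Set.ncard_union_eq hdisj (hfin.subset (by grind))
    (hfin.subset (by grind))]
  congr 1
  grind

lemma cbCount_diff_le (hE : IsClopen E) (hF : IsClopen F) (hG : IsClopen G)
    (hEF : E ∩ cbDeriv X (γ + 1) = F ∩ cbDeriv X (γ + 1))
    (hFG : F ∩ cbDeriv X (γ + 1) = G ∩ cbDeriv X (γ + 1)) :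
    cbCount γ (E \ G) ≤ cbCount γ (E \ F) + cbCount γ (F \ G) := by
  have hfin :=
    (inter_cbDeriv_finite (hE.diff hF).isClosed (diff_inter_cbDeriv_eq_empty hEF)).union
      (inter_cbDeriv_finite (hF.diff hG).isClosed (diff_inter_cbDeriv_eq_empty hFG))
  exact (Set.ncard_le_ncard (by grind) hfin).trans (Set.ncard_union_le _ _)

lemma cbIndex_add (hE : IsClopen E) (hF : IsClopen F) (hG : IsClopen G)
    (hEF : E ∩ cbDeriv X (γ + 1) = F ∩ cbDeriv X (γ + 1))
    (hFG : F ∩ cbDeriv X (γ + 1) = G ∩ cbDeriv X (γ + 1)) :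
    cbIndex γ E F + cbIndex γ F G = cbIndex γ E G := by
  have hEF₁ := cbCount_diff_eq hE hF hEF G
  have hFE₁ := cbCount_diff_eq hF hE hEF.symm G
  have hFG₁ := cbCount_diff_eq hF hG hFG E
  have hGF₁ := cbCount_diff_eq hG hF hFG.symm E
  have hEG₁ := cbCount_diff_eq hE hG (hEF.trans hFG) F
  have hGE₁ := cbCount_diff_eq hG hE (hEF.trans hFG).symm F
  rw [union_comm G E, inter_comm F E] at hFG₁
  rw [union_comm F E, inter_comm G E] at hGF₁
  rw [union_comm G F] at hEG₁
  rw [inter_comm G F] at hGE₁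
  simp only [cbIndex]
  omega

lemma pairSim_diff_image_of_cbIndex {δ ε : Ordinal.{u}} (g : OrdIcc δ ≃ₜ OrdIcc δ)
    {A B A' B' : Set (OrdIcc δ)} {F₁ F₂ : Set (OrdIcc ε)}
    (hA : IsClopen A) (hB : IsClopen B) (hA' : IsClopen A') (hB' : IsClopen B')
    (hF₁ : IsClopen F₁) (hF₂ : IsClopen F₂)
    (hF₁' : F₁ ∩ cbDeriv (OrdIcc ε) (γ + 1) = ∅) (hF₂' : F₂ ∩ cbDeriv (OrdIcc ε) (γ + 1) = ∅)
    (hBA : B ∩ cbDeriv (OrdIcc δ) (γ + 1) = A ∩ cbDeriv (OrdIcc δ) (γ + 1))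
    (hBA' : B' ∩ cbDeriv (OrdIcc δ) (γ + 1) = A' ∩ cbDeriv (OrdIcc δ) (γ + 1))
    (hgA : A' ∩ cbDeriv (OrdIcc δ) (γ + 1) = g '' A ∩ cbDeriv (OrdIcc δ) (γ + 1))
    (hindex : cbIndex γ B' A' + cbIndex γ A' (g '' A) + cbIndex γ A B =
      cbCount γ F₁ - cbCount γ F₂)
    (hgap : cbCount γ (B \ A) + cbCount γ (g '' A \ A') < cbCount γ (B' \ A') ∨
      cbCount γ (B' \ A') + cbCount γ (A' \ g '' A) < cbCount γ (B \ A)) :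
    PairSim ↥(B' \ g '' B) ↥(g '' B \ B') F₁ F₂ := by
  have isClopen_image : ∀ {E}, IsClopen E → IsClopen (g '' E) := fun hE =>
    ⟨g.isClosedMap _ hE.isClosed, g.isOpenMap _ hE.isOpen⟩
  have hgB : g '' A ∩ cbDeriv _ (γ + 1) = g '' B ∩ cbDeriv _ (γ + 1) := by
    rw [image_inter_cbDeriv, image_inter_cbDeriv, hBA]
  have hA'gB := hgA.trans hgB
  have hB'gB := hBA'.trans hA'gB
  have index₁ := cbIndex_add hB' hA' (isClopen_image hB) hBA' hA'gB
  have index₂ := cbIndex_add hA' (isClopen_image hA) (isClopen_image hB) hgA hgB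
  have hgBA : cbCount γ (g '' B \ g '' A) = cbCount γ (B \ A) := by
    rw [← Set.image_sdiff g.injective, cbCount_image]
  have count₁ := cbCount_diff_le hB' (isClopen_image hB) hA' hB'gB hA'gB.symm
  have count₂ := cbCount_diff_le (isClopen_image hB) (isClopen_image hA) hA' hgB.symm hgA.symm
  have count₃ := cbCount_diff_le (isClopen_image hB) hB' (isClopen_image hA) hB'gB.symm
    (hBA'.trans hgA)
  have count₄ := cbCount_diff_le hB' hA' (isClopen_image hA) hBA' hgA
  rw [cbIndex_image] at index₂
  have hindex' : cbIndex γ B' (g '' B) = cbCount γ F₁ - cbCount γ F₂ := by omega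
  simp only [cbIndex] at hindex'
  exact pairSim_of_cbCount (hB'.diff (isClopen_image hB)) ((isClopen_image hB).diff hB') hF₁ hF₂
    (diff_inter_cbDeriv_eq_empty hB'gB) (diff_inter_cbDeriv_eq_empty hB'gB.symm) hF₁' hF₂'
    (by omega) (by omega)

end Index

section Glue

variable {X ι : Type*} [TopologicalSpace X] {A B : ι → Set X} {p : X}

lemma isOpenEmbedding_sigma_val (hA : ∀ i, IsOpen (A i))
    (hdisj : Pairwise (Function.onFun Disjoint A)) :
    IsOpenEmbedding fun x : Σ i, A i => (x.2 : X) := by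
  refine .of_continuous_injective_isOpenMap (continuous_sigma fun i => continuous_subtype_val) ?_
    (isOpenMap_sigma.2 fun i => (hA i).isOpenMap_subtype_val)
  rintro ⟨i, x⟩ ⟨j, y⟩ (hxy : (x : X) = y)
  obtain rfl : i = j := by
    by_contra hij
    exact (hdisj hij).ne_of_mem x.2 y.2 hxy
  rw [Subtype.ext hxy]

/-- Both unions are open and have the space as one-point compactification. -/
lemma exists_homeomorph_forall_image_eq [CompactSpace X] [T2Space X]
    (hA : ∀ i, IsOpen (A i)) (hB : ∀ i, IsOpen (B i))
    (hAdisj : Pairwise (Function.onFun Disjoint A)) (hBdisj : Pairwise (Function.onFun Disjoint B))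
    (hAp : ⋃ i, A i = {p}ᶜ) (hBp : ⋃ i, B i = {p}ᶜ) (e : ∀ i, A i ≃ₜ B i) :
    ∃ h : X ≃ₜ X, ∀ i, h '' A i = B i := by
  have range_eq : ∀ {C : ι → Set X}, ⋃ i, C i = {p}ᶜ →
      range (fun x : Σ i, C i => (x.2 : X)) = {p}ᶜ := by
    intro C hC
    rw [← hC]
    ext x
    simp
  let a := OnePoint.equivOfIsEmbeddingOfRangeEq p _
    (isOpenEmbedding_sigma_val hA hAdisj).isEmbedding (range_eq hAp)
  let b := OnePoint.equivOfIsEmbeddingOfRangeEq p _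
    (isOpenEmbedding_sigma_val hB hBdisj).isEmbedding (range_eq hBp)
  let s : (Σ i, A i) ≃ₜ Σ i, B i :=
    (IsHomeomorph.sigmaMap (f := id) (g := fun i => ⇑(e i)) Function.bijective_id
      fun i => (e i).isHomeomorph).homeomorph
  let h := a.symm.trans (s.onePointCongr.trans b)
  have h_apply : ∀ i (x : A i), h x = e i x := fun i x => by
    change b (s.onePointCongr (a.symm (a ((⟨i, x⟩ : Σ i, A i) : OnePoint _)))) = _
    rw [a.symm_apply_apply]
    rfl
  refine ⟨h, fun i => Subset.antisymm ?_ fun y hy => ?_⟩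
  · rintro _ ⟨x, hx, rfl⟩
    exact h_apply i ⟨x, hx⟩ ▸ (e i ⟨x, hx⟩).2
  · exact ⟨(e i).symm ⟨y, hy⟩, ((e i).symm ⟨y, hy⟩).2, by simp [h_apply]⟩

end Glue

section Layer

variable {X : Type*} {S U V : ℕ → Set X}

/-- The successive differences of an increasing sequence of sets, indexed from `1` like the
blocks `A_n`. -/
def layer (S : ℕ → Set X) (i : ℕ+) : Set X := S i \ S i.natPred

lemma pairwise_disjoint_layer (hS : Monotone S) :
    Pairwise (Function.onFun Disjoint (layer S)) := by
  have h : layer S = fun i : ℕ+ => disjointed S i := by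
    funext i
    rw [← i.natPred_add_one, hS.disjointed_add_one, layer, i.natPred_add_one]
  exact h ▸ (disjoint_disjointed S).comp_of_injective PNat.coe_injective

lemma iUnion_layer (hS : Monotone S) (h0 : S 0 = ∅) : ⋃ i, layer S i = ⋃ n, S n := by
  refine Subset.antisymm (iUnion_subset fun i => sdiff_subset.trans (subset_iUnion S i)) ?_
  rw [← iUnion_disjointed]
  refine iUnion_subset fun n x hx => ?_
  cases n with
  | zero => simp [h0] at hx
  | succ n =>
    rw [hS.disjointed_add_one] at hx
    exact mem_iUnion.2 ⟨n.succPNat, hx⟩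

/-- Data for moving points across the boundaries of the layers of `S`: the boundary `n` separates
`S n` from its complement, the points of `V n` cross it downwards and those of `U n` upwards.
Each point moves by one layer at most. -/
structure IsExchange (S U V : ℕ → Set X) : Prop where
  monotone : Monotone S
  zero : S 0 = ∅
  up_zero : U 0 = ∅
  up_subset : ∀ n, U (n + 1) ⊆ S (n + 1) \ S n
  down_zero : V 0 = ∅
  down_subset : ∀ n, V n ⊆ S (n + 1) \ S n
  disjoint : ∀ n, Disjoint (V n) (U (n + 1))

/-- The sequence whose layers are those of `S` after the points of `U` and `V` have moved. -/
def exchange (S U V : ℕ → Set X) (n : ℕ) : Set X := S n \ U n ∪ V n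

namespace IsExchange

variable (h : IsExchange S U V)
include h

lemma exchange_zero : exchange S U V 0 = ∅ := by
  rw [exchange, h.zero, h.down_zero, empty_sdiff, empty_union]

lemma up_subset_self (n : ℕ) : U n ⊆ S n := by
  cases n with
  | zero => simp [h.up_zero]
  | succ n => exact (h.up_subset n).trans sdiff_subset

lemma subset_exchange_add_one (n : ℕ) : S n ⊆ exchange S U V (n + 1) := fun _ hx =>
  .inl ⟨h.monotone n.le_succ hx, fun hU => (h.up_subset n hU).2 hx⟩

lemma exchange_subset_add_one (n : ℕ) : exchange S U V n ⊆ S (n + 1) :=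
  union_subset (sdiff_subset.trans (h.monotone n.le_succ)) ((h.down_subset n).trans sdiff_subset)

lemma monotone_exchange : Monotone (exchange S U V) := by
  refine monotone_nat_of_le_succ fun n => union_subset ?_ fun x hx => ?_
  · exact sdiff_subset.trans (h.subset_exchange_add_one n)
  · exact .inl ⟨(h.down_subset n hx).1, (h.disjoint n).notMem_of_mem_left hx⟩

lemma iUnion_exchange : ⋃ n, exchange S U V n = ⋃ n, S n :=
  Subset.antisymm
    (iUnion_subset fun n => (h.exchange_subset_add_one n).trans (subset_iUnion S (n + 1)))
    (iUnion_subset fun n => (h.subset_exchange_add_one n).trans (subset_iUnion _ (n + 1)))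

lemma layer_exchange_diff (i : ℕ+) :
    layer (exchange S U V) i \ layer S i = V i ∪ U i.natPred := by
  obtain ⟨n, rfl⟩ : ∃ n : ℕ, n.succPNat = i := ⟨_, i.succPNat_natPred⟩
  have := h.monotone n.le_succ
  have := h.up_subset_self n
  have := h.up_subset n
  have := h.down_subset n
  have := h.down_subset (n + 1)
  simp only [layer, exchange, Nat.natPred_succPNat, Nat.succPNat_coe, Nat.succ_eq_add_one]
  ext x
  grind

lemma layer_diff_exchange (i : ℕ+) :
    layer S i \ layer (exchange S U V) i = V i.natPred ∪ U i := by
  obtain ⟨n, rfl⟩ : ∃ n : ℕ, n.succPNat = i := ⟨_, i.succPNat_natPred⟩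
  have := h.up_subset_self n
  have := h.up_subset n
  have := h.down_subset n
  have := h.down_subset (n + 1)
  have := (h.disjoint n).notMem_of_mem_left
  simp only [layer, exchange, Nat.natPred_succPNat, Nat.succPNat_coe, Nat.succ_eq_add_one]
  ext x
  grind

lemma disjoint_down_up_natPred (i : ℕ+) : Disjoint (V i) (U i.natPred) :=
  Set.disjoint_left.2 fun _ hV hU => (h.down_subset i hV).2
    (h.monotone (Nat.sub_le _ _) (h.up_subset_self _ hU))

lemma disjoint_down_natPred_up (i : ℕ+) : Disjoint (V i.natPred) (U i) := by
  simpa only [i.natPred_add_one] using h.disjoint i.natPred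

end IsExchange

end Layer

/-! ### Perturbed blocks -/

section Interval

variable {X Y : Type (u + 1)} [TopologicalSpace X] [TopologicalSpace Y] {γ a b z : Ordinal.{u}}

lemma cbCount_preimage_of_isOpenEmbedding {e : X → Y} (he : IsOpenEmbedding e) {E : Set Y}
    (hE : E ⊆ range e) : cbCount γ (e ⁻¹' E) = cbCount γ E := by
  rw [cbCount, ← preimage_cbDeriv_of_isOpenEmbedding he, ← preimage_inter, cbCount,
    ← Set.ncard_image_of_injective _ he.injective,
    image_preimage_eq_of_subset (inter_subset_left.trans hE)]

/-- The interval `(a, a + b]`, as a subset of `[1, z]`. -/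
def OrdIcc.interval (z a b : Ordinal.{u}) : Set (OrdIcc z) :=
  Subtype.val ⁻¹' Set.Ioc a (a + b)

lemma OrdIcc.mem_interval {x : OrdIcc z} : x ∈ interval z a b ↔ a < x ∧ (x : Ordinal) ≤ a + b :=
  Iff.rfl

lemma OrdIcc.interval_zero : interval z a 0 = ∅ := by
  simp [interval]

lemma OrdIcc.isClopen_interval : IsClopen (interval z a b) :=
  isClopen_Ioc_ordinal.preimage continuous_subtype_val

lemma OrdIcc.interval_inter_cbDeriv (hb : b < ω ^ γ) :
    interval z a b ∩ cbDeriv (OrdIcc z) γ = ∅ := by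
  obtain ⟨e⟩ := nonempty_homeomorph_Ioc_add a b
  have h : Set.Ioc a (a + b) ∩ cbDeriv Ordinal γ = ∅ := by
    rw [← cbDeriv_coe_eq_empty_iff isClopen_Ioc_ordinal.isOpen, ← image_cbDeriv_of_homeomorph e,
      cbDeriv_OrdIcc_eq_empty_iff.2 hb, image_empty]
  rw [← preimage_cbDeriv_of_isOpenEmbedding OrdIcc.isOpenEmbedding_val, interval,
    ← preimage_inter, h, preimage_empty]

lemma OrdIcc.cbCount_interval (h : a + b ≤ z) :
    cbCount γ (interval z a b) = (cbDeriv (OrdIcc b) γ).ncard := by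
  obtain ⟨e⟩ := nonempty_homeomorph_Ioc_add a b
  have hrange : Set.Ioc a (a + b) ⊆ range (Subtype.val : OrdIcc z → Ordinal) := by
    rw [Subtype.range_coe, Icc_one_eq_Ioc_zero]
    exact Ioc_subset_Ioc zero_le h
  rw [interval, cbCount_preimage_of_isOpenEmbedding OrdIcc.isOpenEmbedding_val hrange,
    ← ncard_cbDeriv_coe isClopen_Ioc_ordinal.isOpen, ← image_cbDeriv_of_homeomorph e,
    Set.ncard_image_of_injective _ e.injective]

end Interval

section Block

variable {α : Ordinal.{u}}

/-- The union `A_1 ∪ … ∪ A_n` of the first `n` blocks of `X`. -/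
def blockUnion (α : Ordinal.{u}) (n : ℕ) : Set (Xsp α) := {x | (x : Ordinal) ≤ ω ^ α * n}

/-- The last point `δ` of `X`. -/
def lastPt (α : Ordinal.{u}) : Xsp α :=
  ⟨ω ^ (α + 1), Order.one_le_iff_pos.2 (opow_pos _ omega0_pos), le_rfl⟩

lemma coe_lastPt : (lastPt α : Ordinal) = ω ^ (α + 1) := rfl

lemma mem_blockUnion {n : ℕ} {x : Xsp α} : x ∈ blockUnion α n ↔ (x : Ordinal) ≤ ω ^ α * n :=
  Iff.rfl

lemma monotone_blockUnion : Monotone (blockUnion α) := fun _ _ hmn _ hx =>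
  (mem_blockUnion.1 hx).trans (mul_le_mul_right (Nat.cast_le.2 hmn) _)

lemma blockUnion_zero : blockUnion α 0 = ∅ := by
  refine eq_empty_of_forall_notMem fun x hx => x.ne_zero ?_
  simpa [blockUnion] using hx

lemma isClopen_blockUnion (n : ℕ) : IsClopen (blockUnion α n) := by
  have h : blockUnion α n = OrdIcc.interval _ 0 (ω ^ α * n) := by
    ext x
    rw [mem_blockUnion, OrdIcc.mem_interval, zero_add, and_iff_right (pos_iff_ne_zero.2 x.ne_zero)]
  exact h ▸ OrdIcc.isClopen_interval

lemma iUnion_blockUnion : ⋃ n, blockUnion α n = {lastPt α}ᶜ := by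
  ext x
  rw [mem_iUnion, mem_compl_singleton_iff]
  constructor
  · rintro ⟨n, hn⟩ rfl
    refine (mem_blockUnion.1 hn).not_gt ?_
    rw [coe_lastPt]
    exact opow_mul_lt_opow (natCast_lt_omega0 n) (lt_add_one α)
  · intro hx
    have hlt : (x : Ordinal) < ω ^ α * ω := by
      rw [← opow_add_one]
      exact x.2.2.lt_of_ne fun h => hx (Subtype.ext h)
    obtain ⟨b, hb, hxb⟩ := (lt_mul_iff_of_isSuccLimit isSuccLimit_omega0).1 hlt
    obtain ⟨n, rfl⟩ := lt_omega0.1 hb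
    exact ⟨n, hxb.le⟩

lemma Ablock_eq_layer (i : ℕ+) : Ablock α i = layer (blockUnion α) i := by
  ext x
  change ω ^ α * (i.natPred : Ordinal) + 1 ≤ (x : Ordinal) ∧ (x : Ordinal) ≤ ω ^ α * (i : ℕ) ↔ _
  rw [Order.add_one_le_iff, layer, Set.mem_sdiff, mem_blockUnion, mem_blockUnion, not_le, and_comm]

lemma pairwise_disjoint_Ablock : Pairwise (Function.onFun Disjoint (Ablock α)) := by
  rw [funext Ablock_eq_layer]
  exact pairwise_disjoint_layer monotone_blockUnion

lemma iUnion_Ablock : ⋃ i, Ablock α i = {lastPt α}ᶜ := by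
  rw [funext Ablock_eq_layer, iUnion_layer monotone_blockUnion blockUnion_zero, iUnion_blockUnion]

lemma isClopen_Ablock (i : ℕ+) : IsClopen (Ablock α i) :=
  Ablock_eq_layer (α := α) i ▸ (isClopen_blockUnion _).diff (isClopen_blockUnion _)

lemma pt_injective : Function.Injective (pt α) := fun m n h => by
  have hmul : ω ^ α * ((m : ℕ) : Ordinal.{u}) = ω ^ α * (n : ℕ) := congrArg Subtype.val h
  exact PNat.coe_injective (Nat.cast_injective (mul_left_cancel₀ (opow_pos α omega0_pos).ne' hmul))

lemma Ablock_inter_cbDeriv (i : ℕ+) : Ablock α i ∩ cbDeriv (Xsp α) α = {pt α i} := by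
  have hpos : 0 < ω ^ α := opow_pos α omega0_pos
  ext x
  rw [Ablock_eq_layer, mem_inter_iff, layer, Set.mem_sdiff, mem_blockUnion, mem_blockUnion, not_le,
    mem_cbDeriv_OrdIcc, mem_singleton_iff, Subtype.ext_iff, pt]
  constructor
  · rintro ⟨⟨hle, hlt⟩, k, hk⟩
    rw [hk] at hle hlt ⊢
    rw [mul_le_mul_iff_right₀ hpos] at hle
    rw [mul_lt_mul_iff_right₀ hpos, ← Order.add_one_le_iff, ← Nat.cast_add_one,
      i.natPred_add_one] at hlt
    rw [hle.antisymm hlt]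
  · intro hx
    rw [hx]
    exact ⟨⟨le_rfl, (mul_lt_mul_iff_right₀ hpos).2 (Nat.cast_lt.2 i.natPred_add_one.le)⟩,
      dvd_mul_right _ _⟩

lemma inter_cbDeriv_add_one_eq_empty {E : Set (Xsp α)} (hE : E ⊆ {lastPt α}ᶜ) :
    E ∩ cbDeriv (Xsp α) (α + 1) = ∅ := by
  refine eq_empty_of_forall_notMem fun x hx => hE hx.1 ?_
  have hle : ω ^ (α + 1) ≤ (x : Ordinal) := le_of_dvd x.ne_zero (mem_cbDeriv_OrdIcc.1 hx.2)
  exact Subtype.ext (x.2.2.antisymm hle)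

end Block

section ExchangeSizes

variable {α γ : Ordinal.{u}}

lemma natPred_le_coe (i : ℕ+) : i.natPred ≤ i := Nat.sub_le _ _

/-- Order types of the intervals which are exchanged across the boundaries `ω ^ α * n` of the
blocks: `down n` of the one joining the block below, `up n` of the one joining the block above.
Index `0` stands for the lower end of `A_1`, which nothing crosses. -/
structure ExchangeSizes (α : Ordinal.{u}) where
  down : ℕ → Ordinal.{u}
  up : ℕ → Ordinal.{u}
  down_zero : down 0 = 0
  up_zero : up 0 = 0
  down_lt : ∀ n, down n < ω ^ α
  up_lt : ∀ n, up n < ω ^ α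

namespace ExchangeSizes

variable (s : ExchangeSizes α)

/-- The first `down n` points above the boundary `ω ^ α * n`. -/
def downSet (n : ℕ) : Set (Xsp α) := OrdIcc.interval _ (ω ^ α * n) (s.down n)

/-- The `up n` points of the block below the boundary `ω ^ α * n` which follow its initial part
`downSet (n - 1)`. -/
def upSet (n : ℕ) : Set (Xsp α) :=
  OrdIcc.interval _ (ω ^ α * (n - 1 : ℕ) + s.down (n - 1)) (s.up n)

/-- The block `B_i` obtained from `A_i` by exchanging intervals with its two neighbours. -/
def block (i : ℕ+) : Set (Xsp α) := layer (exchange (blockUnion α) s.upSet s.downSet) i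

lemma mul_add_down_lt (n : ℕ) : ω ^ α * n + s.down n < ω ^ α * (n + 1 : ℕ) := by
  rw [Nat.cast_add_one, mul_add_one]
  exact add_lt_add_right (s.down_lt n) _

lemma mul_add_down_add_up_lt (n : ℕ) :
    ω ^ α * n + s.down n + s.up (n + 1) < ω ^ α * (n + 1 : ℕ) := by
  rw [Nat.cast_add_one, mul_add_one, add_assoc]
  exact add_lt_add_right
    (isPrincipal_add_omega0_opow α (s.down_lt n) (s.up_lt (n + 1))) _

lemma isExchange : IsExchange (blockUnion α) s.upSet s.downSet where
  monotone := monotone_blockUnion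
  zero := blockUnion_zero
  up_zero := by rw [upSet, s.up_zero, OrdIcc.interval_zero]
  up_subset n x hx := by
    obtain ⟨hlt, hle⟩ := OrdIcc.mem_interval.1 hx
    exact ⟨(hle.trans_lt (s.mul_add_down_add_up_lt n)).le, (le_self_add.trans_lt hlt).not_ge⟩
  down_zero := by rw [downSet, s.down_zero, OrdIcc.interval_zero]
  down_subset n x hx := by
    obtain ⟨hlt, hle⟩ := OrdIcc.mem_interval.1 hx
    exact ⟨(hle.trans_lt (s.mul_add_down_lt n)).le, hlt.not_ge⟩
  disjoint n := Set.disjoint_left.2 fun x hV hU =>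
    (OrdIcc.mem_interval.1 hU).1.not_ge (OrdIcc.mem_interval.1 hV).2

lemma block_diff_Ablock (i : ℕ+) : s.block i \ Ablock α i = s.downSet i ∪ s.upSet i.natPred := by
  rw [block, Ablock_eq_layer, s.isExchange.layer_exchange_diff]

lemma Ablock_diff_block (i : ℕ+) : Ablock α i \ s.block i = s.downSet i.natPred ∪ s.upSet i := by
  rw [block, Ablock_eq_layer, s.isExchange.layer_diff_exchange]

lemma isClopen_block (i : ℕ+) : IsClopen (s.block i) := by
  have h : ∀ n, IsClopen (exchange (blockUnion α) s.upSet s.downSet n) := fun n =>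
    ((isClopen_blockUnion n).diff OrdIcc.isClopen_interval).union OrdIcc.isClopen_interval
  exact (h _).diff (h _)

lemma isClosed_downSet (n : ℕ) : IsClosed (s.downSet n) := OrdIcc.isClopen_interval.isClosed

lemma isClosed_upSet (n : ℕ) : IsClosed (s.upSet n) := OrdIcc.isClopen_interval.isClosed

lemma downSet_inter_cbDeriv {n : ℕ} (h : s.down n < ω ^ γ) :
    s.downSet n ∩ cbDeriv (Xsp α) γ = ∅ :=
  OrdIcc.interval_inter_cbDeriv h

lemma upSet_inter_cbDeriv {n : ℕ} (h : s.up n < ω ^ γ) : s.upSet n ∩ cbDeriv (Xsp α) γ = ∅ :=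
  OrdIcc.interval_inter_cbDeriv h

lemma cbCount_downSet (n : ℕ) :
    cbCount γ (s.downSet n) = (cbDeriv (OrdIcc (s.down n)) γ).ncard :=
  OrdIcc.cbCount_interval <| (s.mul_add_down_lt n).le.trans
    (opow_mul_lt_opow (natCast_lt_omega0 _) (lt_add_one α)).le

lemma cbCount_upSet (n : ℕ) :
    cbCount γ (s.upSet n) = (cbDeriv (OrdIcc (s.up n)) γ).ncard := by
  refine OrdIcc.cbCount_interval ?_
  cases n with
  | zero =>
    rw [s.up_zero, add_zero]
    exact (s.mul_add_down_lt _).le.trans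
      (opow_mul_lt_opow (natCast_lt_omega0 _) (lt_add_one α)).le
  | succ n =>
    exact (s.mul_add_down_add_up_lt n).le.trans
      (opow_mul_lt_opow (natCast_lt_omega0 _) (lt_add_one α)).le

section Small

variable {s} {i : ℕ+} (h : ∀ n ≤ (i : ℕ), s.down n < ω ^ γ ∧ s.up n < ω ^ γ)
include h

lemma block_diff_Ablock_inter_cbDeriv : (s.block i \ Ablock α i) ∩ cbDeriv (Xsp α) γ = ∅ := by
  rw [block_diff_Ablock, union_inter_distrib_right, s.downSet_inter_cbDeriv (h _ le_rfl).1,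
    s.upSet_inter_cbDeriv (h _ (natPred_le_coe i)).2, union_empty]

lemma Ablock_diff_block_inter_cbDeriv : (Ablock α i \ s.block i) ∩ cbDeriv (Xsp α) γ = ∅ := by
  rw [Ablock_diff_block, union_inter_distrib_right, s.upSet_inter_cbDeriv (h _ le_rfl).2,
    s.downSet_inter_cbDeriv (h _ (natPred_le_coe i)).1, union_empty]

lemma block_inter_cbDeriv :
    s.block i ∩ cbDeriv (Xsp α) γ = Ablock α i ∩ cbDeriv (Xsp α) γ :=
  inter_cbDeriv_eq_of_diff (block_diff_Ablock_inter_cbDeriv h)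
    (Ablock_diff_block_inter_cbDeriv h)

end Small

section Count

variable {s} {i : ℕ+} (h : ∀ n ≤ (i : ℕ), s.down n < ω ^ (γ + 1) ∧ s.up n < ω ^ (γ + 1))
include h

lemma cbCount_block_diff_Ablock :
    cbCount γ (s.block i \ Ablock α i) =
      cbCount γ (s.downSet i) + cbCount γ (s.upSet i.natPred) := by
  rw [block_diff_Ablock, cbCount_union (s.isClosed_downSet _) (s.isClosed_upSet _)
    (s.isExchange.disjoint_down_up_natPred i)
    (s.downSet_inter_cbDeriv (h _ le_rfl).1) (s.upSet_inter_cbDeriv (h _ (natPred_le_coe i)).2)]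

lemma cbCount_Ablock_diff_block :
    cbCount γ (Ablock α i \ s.block i) =
      cbCount γ (s.downSet i.natPred) + cbCount γ (s.upSet i) := by
  rw [Ablock_diff_block, cbCount_union (s.isClosed_downSet _) (s.isClosed_upSet _)
    (s.isExchange.disjoint_down_natPred_up i)
    (s.downSet_inter_cbDeriv (h _ (natPred_le_coe i)).1) (s.upSet_inter_cbDeriv (h _ le_rfl).2)]

end Count

lemma block_inter_cbDeriv_self (i : ℕ+) : s.block i ∩ cbDeriv (Xsp α) α = {pt α i} := by
  rw [block_inter_cbDeriv fun n _ => ⟨s.down_lt n, s.up_lt n⟩, Ablock_inter_cbDeriv]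

lemma pairwise_disjoint_block : Pairwise (Function.onFun Disjoint s.block) :=
  pairwise_disjoint_layer s.isExchange.monotone_exchange

lemma iUnion_block : ⋃ i, s.block i = {lastPt α}ᶜ := by
  rw [← iUnion_blockUnion, ← s.isExchange.iUnion_exchange]
  exact iUnion_layer s.isExchange.monotone_exchange s.isExchange.exchange_zero

lemma nonempty_homeomorph_block (i : ℕ+) : Nonempty (Ablock α i ≃ₜ s.block i) := by
  have hA := isClopen_Ablock (α := α) i
  have hB := s.isClopen_block i
  have hA₁ : (cbDeriv (Ablock α i) α).ncard = 1 := by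
    rw [ncard_cbDeriv_coe hA.isOpen, cbCount, Ablock_inter_cbDeriv, Set.ncard_singleton]
  have hB₁ : (cbDeriv (s.block i) α).ncard = 1 := by
    rw [ncard_cbDeriv_coe hB.isOpen, cbCount, block_inter_cbDeriv_self, Set.ncard_singleton]
  refine (isOrdIcc_of_isClopen hA).nonempty_homeomorph (isOrdIcc_of_isClopen hB) ?_ ?_
    (hA₁ ▸ one_pos) (hA₁.trans hB₁.symm)
  · rw [cbDeriv_coe_eq_empty_iff hA.isOpen]
    exact inter_cbDeriv_add_one_eq_empty (iUnion_Ablock ▸ subset_iUnion _ i)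
  · rw [cbDeriv_coe_eq_empty_iff hB.isOpen]
    exact inter_cbDeriv_add_one_eq_empty (s.iUnion_block ▸ subset_iUnion _ i)

lemma exists_homeomorph_image_Ablock :
    ∃ h : Xsp α ≃ₜ Xsp α, (∀ i, h '' Ablock α i = s.block i) ∧ ∀ i, h (pt α i) = pt α i := by
  obtain ⟨h, hh⟩ := exists_homeomorph_forall_image_eq (fun i => (isClopen_Ablock i).isOpen)
    (fun i => (s.isClopen_block i).isOpen) pairwise_disjoint_Ablock s.pairwise_disjoint_block
    iUnion_Ablock s.iUnion_block fun i => (s.nonempty_homeomorph_block i).some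
  refine ⟨h, hh, fun i => ?_⟩
  have himage := image_inter_cbDeriv h (Ablock α i) (γ := α)
  rw [hh, Ablock_inter_cbDeriv, s.block_inter_cbDeriv_self, image_singleton] at himage
  exact (singleton_injective himage).symm

end ExchangeSizes

end ExchangeSizes

/-! ### Conjugation -/

lemma PairSim.congr {P₁ P₂ Q₁ Q₂ F₁ F₂ : Type*} [TopologicalSpace P₁] [TopologicalSpace P₂]
    [TopologicalSpace Q₁] [TopologicalSpace Q₂] [TopologicalSpace F₁] [TopologicalSpace F₂]
    (eP : P₁ ≃ₜ P₂) (eQ : Q₁ ≃ₜ Q₂) (h : PairSim P₁ Q₁ F₁ F₂) : PairSim P₂ Q₂ F₁ F₂ := by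
  obtain ⟨e⟩ := h
  exact ⟨((eP.symm.sumCongr (.refl _)).trans e).trans (.sumCongr (.refl _) eQ)⟩

section Conjugation

variable {α : Ordinal.{u}} {π : (Xsp α ≃ₜ Xsp α) → Equiv.Perm ℕ+} {g h : Xsp α ≃ₜ Xsp α}
  {B : ℕ+ → Set (Xsp α)} (i : ℕ+)

lemma IsBlockPerm.eq_one (hπ : IsBlockPerm α π) (hh : ∀ i, h (pt α i) = pt α i) : π h = 1 :=
  Equiv.ext fun i => pt_injective ((hπ h i).symm.trans (hh i))

lemma IsBlockPerm.conj_apply (hπ : IsBlockPerm α π) (hh : ∀ i, h (pt α i) = pt α i) :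
    π ((h.trans g).trans h.symm) i = π g i := by
  apply pt_injective
  rw [← hπ, Homeomorph.trans_apply, Homeomorph.trans_apply, hh, hπ g, Homeomorph.symm_apply_eq, hh]

lemma image_Pset_conj (hπ : IsBlockPerm α π) (hh : ∀ i, h (pt α i) = pt α i)
    (hB : ∀ i, h '' Ablock α i = B i) :
    h '' Pset α π ((h.trans g).trans h.symm) i = B (π g i) \ g '' B i := by
  rw [Pset, hπ.conj_apply i hh, Set.image_sdiff h.injective, hB, ← hB i, ← image_comp,
    ← image_comp]
  congr 2
  ext x
  simp

lemma image_Qset_conj (hπ : IsBlockPerm α π) (hh : ∀ i, h (pt α i) = pt α i)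
    (hB : ∀ i, h '' Ablock α i = B i) :
    (h.trans g) '' Qset α π ((h.trans g).trans h.symm) i = g '' B i \ B (π g i) := by
  rw [Qset, hπ.conj_apply i hh, Set.image_sdiff (h.trans g).injective, ← hB i,
    ← hB (π g i), ← Homeomorph.image_symm, ← image_comp, ← image_comp]
  congr 2
  ext x
  simp

lemma ExchangeSizes.exists_conj_pairSim (s : ExchangeSizes α) (hπ : IsBlockPerm α π)
    {F₁ F₂ : ℕ+ → Type*} [∀ i, TopologicalSpace (F₁ i)] [∀ i, TopologicalSpace (F₂ i)]
    (hs : ∀ i, PairSim ↥(s.block (π g i) \ g '' s.block i) ↥(g '' s.block i \ s.block (π g i))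
      (F₁ i) (F₂ i)) :
    ∃ h : Xsp α ≃ₜ Xsp α, π h = 1 ∧ ∀ i,
      PairSim ↥(Pset α π ((h.trans g).trans h.symm) i) ↥(Qset α π ((h.trans g).trans h.symm) i)
        (F₁ i) (F₂ i) := by
  obtain ⟨h, hB, hh⟩ := s.exists_homeomorph_image_Ablock
  refine ⟨h, hπ.eq_one hh, fun i => (hs i).congr ?_ ?_⟩
  · exact ((h.image _).trans (.setCongr (image_Pset_conj i hπ hh hB))).symm
  · exact (((h.trans g).image _).trans (.setCongr (image_Qset_conj i hπ hh hB))).symm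

end Conjugation

/-! ### Permutations with infinite orbits -/

section Perm

variable {ι : Type*} {σ : Equiv.Perm ι}

lemma eq_zero_of_zpow_apply_eq_self [Infinite ι] (hσ : ∀ i j, ∃ k : ℤ, (σ ^ k) i = j) (i : ι)
    (k : ℤ) (hk : (σ ^ k) i = i) : k = 0 := by
  have horbit : MulAction.orbit (Subgroup.zpowers σ) i = Set.univ :=
    eq_univ_of_forall fun j => (hσ i j).elim fun k hk => ⟨⟨σ ^ k, k, rfl⟩, hk⟩
  have hperiod : Function.minimalPeriod (σ • ·) i = 0 := by
    by_contra hne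
    have : NeZero (Function.minimalPeriod (σ • ·) i) := ⟨hne⟩
    have := Finite.of_equiv _ (MulAction.orbitZPowersEquiv σ i).symm
    exact Set.infinite_univ (horbit ▸ Set.toFinite (MulAction.orbit (Subgroup.zpowers σ) i))
  have hdvd := MulAction.zpow_smul_eq_iff_minimalPeriod_dvd.1 (show σ ^ k • i = i from hk)
  rwa [hperiod, Nat.cast_zero, zero_dvd_iff] at hdvd

lemma zpow_prodShear_addRight_fst {A : Type*} [AddGroup A] (w : ι → A) (k : ℤ) (x : ι × A) :
    (((σ.prodShear fun i => Equiv.addRight (w i) : Equiv.Perm (ι × A)) ^ k) x).1 =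
      (σ ^ k) x.1 := by
  induction k generalizing x with
  | zero => rfl
  | succ k ih =>
    rw [zpow_add_one, zpow_add_one, Equiv.Perm.mul_apply, Equiv.Perm.mul_apply, ih]
    rfl
  | pred k ih =>
    rw [zpow_sub_one, zpow_sub_one, Equiv.Perm.mul_apply, Equiv.Perm.mul_apply, ih]
    rfl

/- The solution is read off the orbits of the skew product `(i, a) ↦ (σ i, a + w i)` started at
`(r, 0)`, where `r` is a representative of the orbit of `i`. -/
lemma exists_apply_eq_add {A : Type*} [AddGroup A] (hσ : ∀ i (k : ℤ), (σ ^ k) i = i → k = 0)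
    (w : ι → A) : ∃ c : ι → A, ∀ i, c (σ i) = c i + w i := by
  let r : ι → ι := fun i => (Quotient.mk (Equiv.Perm.SameCycle.setoid σ) i).out
  have hr : ∀ i, r (σ i) = r i := fun i =>
    congrArg Quotient.out (Quotient.sound (Equiv.Perm.sameCycle_apply_left.2 (.refl σ i)))
  choose k hk using fun i => Quotient.mk_out (s := Equiv.Perm.SameCycle.setoid σ) i
  have hk_apply : ∀ i, k (σ i) = 1 + k i := by
    intro i
    refine sub_eq_zero.1 (hσ (r i) _ ?_)
    rw [sub_eq_neg_add, zpow_add, Equiv.Perm.mul_apply, zpow_neg, Equiv.Perm.inv_eq_iff_eq,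
      zpow_one_add, Equiv.Perm.mul_apply, ← hr i, hk (σ i), hr i, hk i]
  let τ : Equiv.Perm (ι × A) := σ.prodShear fun i => Equiv.addRight (w i)
  refine ⟨fun i => ((τ ^ k i) (r i, 0)).2, fun i => ?_⟩
  have hfst : ((τ ^ k i) (r i, 0)).1 = i := (zpow_prodShear_addRight_fst w _ _).trans (hk i)
  calc ((τ ^ k (σ i)) (r (σ i), 0)).2 = (τ ((τ ^ k i) (r i, 0))).2 := by
        rw [hk_apply, hr, zpow_one_add, Equiv.Perm.mul_apply]
    _ = ((τ ^ k i) (r i, 0)).2 + w ((τ ^ k i) (r i, 0)).1 := rfl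
    _ = ((τ ^ k i) (r i, 0)).2 + w i := by rw [hfst]

end Perm

/-! ### The choice of the exchange sizes -/

section Choice

variable {α γ ε : Ordinal.{u}} {g : Xsp α ≃ₜ Xsp α}

lemma inter_cbDeriv_eq_empty_of_bounded {F : Set (OrdIcc (ω ^ α))}
    (hF : ∃ x < ω ^ α, ∀ y ∈ F, (y : Ordinal) ≤ x) : F ∩ cbDeriv (OrdIcc (ω ^ α)) α = ∅ := by
  obtain ⟨x, hx, hFx⟩ := hF
  rw [eq_empty_iff_forall_notMem]
  rintro y ⟨hyF, hy⟩
  exact ((hFx y hyF).trans_lt hx).not_ge (le_of_dvd y.ne_zero (mem_cbDeriv_OrdIcc.1 hy))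

lemma Ablock_inter_cbDeriv_eq_image {i j : ℕ+} (h : g (pt α i) = pt α j) :
    Ablock α j ∩ cbDeriv (Xsp α) α = g '' Ablock α i ∩ cbDeriv (Xsp α) α := by
  rw [image_inter_cbDeriv, Ablock_inter_cbDeriv, Ablock_inter_cbDeriv, image_singleton, h]

lemma ExchangeSizes.pairSim_block (s : ExchangeSizes α) {i j : ℕ+} {F₁ F₂ : Set (OrdIcc ε)}
    (hF₁ : IsClopen F₁) (hF₂ : IsClopen F₂)
    (hF₁' : F₁ ∩ cbDeriv (OrdIcc ε) (γ + 1) = ∅) (hF₂' : F₂ ∩ cbDeriv (OrdIcc ε) (γ + 1) = ∅)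
    (hg : Ablock α j ∩ cbDeriv (Xsp α) (γ + 1) = g '' Ablock α i ∩ cbDeriv (Xsp α) (γ + 1))
    (hs : ∀ n ≤ (max i j : ℕ), s.down n < ω ^ (γ + 1) ∧ s.up n < ω ^ (γ + 1))
    (hindex : ((cbCount γ (s.downSet j) - cbCount γ (s.upSet j) : ℤ) -
        (cbCount γ (s.downSet j.natPred) - cbCount γ (s.upSet j.natPred))) -
        ((cbCount γ (s.downSet i) - cbCount γ (s.upSet i)) -
        (cbCount γ (s.downSet i.natPred) - cbCount γ (s.upSet i.natPred))) =
      cbCount γ F₁ - cbCount γ F₂ - cbIndex γ (Ablock α j) (g '' Ablock α i))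
    (hgap : cbCount γ (s.downSet i) + cbCount γ (s.upSet i.natPred) +
          cbCount γ (g '' Ablock α i \ Ablock α j) <
        cbCount γ (s.downSet j) + cbCount γ (s.upSet j.natPred) ∨
      cbCount γ (s.downSet j) + cbCount γ (s.upSet j.natPred) +
          cbCount γ (Ablock α j \ g '' Ablock α i) <
        cbCount γ (s.downSet i) + cbCount γ (s.upSet i.natPred)) :
    PairSim ↥(s.block j \ g '' s.block i) ↥(g '' s.block i \ s.block j) F₁ F₂ := by
  have hsi : ∀ n ≤ (i : ℕ), s.down n < ω ^ (γ + 1) ∧ s.up n < ω ^ (γ + 1) := fun n hn =>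
    hs n (hn.trans (le_max_left _ _))
  have hsj : ∀ n ≤ (j : ℕ), s.down n < ω ^ (γ + 1) ∧ s.up n < ω ^ (γ + 1) := fun n hn =>
    hs n (hn.trans (le_max_right _ _))
  refine pairSim_diff_image_of_cbIndex g (isClopen_Ablock i) (s.isClopen_block i)
    (isClopen_Ablock j) (s.isClopen_block j) hF₁ hF₂ hF₁' hF₂' (block_inter_cbDeriv hsi)
    (block_inter_cbDeriv hsj) hg ?_ ?_
  · simp only [cbIndex, cbCount_block_diff_Ablock hsi, cbCount_block_diff_Ablock hsj,
      cbCount_Ablock_diff_block hsi, cbCount_Ablock_diff_block hsj] at hindex ⊢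
    omega
  · rwa [cbCount_block_diff_Ablock hsi, cbCount_block_diff_Ablock hsj]

end Choice

section Growth

lemma exists_monotone_rapid_growth (a L : ℕ → ℕ) :
    ∃ N : ℕ → ℕ, N 0 = 0 ∧ Monotone N ∧ ∀ i j, i < j → 2 * N i + a i + L j < N j := by
  let N : ℕ → ℕ := Nat.rec 0 fun n m => 2 * m + ∑ k ∈ Finset.range (n + 1), a k + L (n + 1) + 1
  have hN : ∀ n, N (n + 1) = 2 * N n + ∑ k ∈ Finset.range (n + 1), a k + L (n + 1) + 1 :=
    fun _ => rfl
  have hmono : Monotone N := monotone_nat_of_le_succ fun n => by rw [hN]; omega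
  refine ⟨N, rfl, hmono, fun i j hij => ?_⟩
  obtain ⟨n, rfl⟩ := Nat.exists_eq_add_one_of_ne_zero (Nat.ne_zero_of_lt hij)
  have hai := Finset.single_le_sum_of_canonicallyOrdered (f := a) (Finset.mem_range.2 hij)
  have hNi := hmono (Nat.le_of_lt_add_one hij)
  rw [hN]
  omega

lemma exists_counts (c : ℕ+ → ℤ) (L : ℕ+ → ℕ) :
    ∃ y v : ℕ → ℕ, y 0 = 0 ∧ v 0 = 0 ∧
      (∀ i : ℕ+, ((y i : ℤ) - v i) - (y i.natPred - v i.natPred) = c i) ∧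
      ∀ i j : ℕ+, i < j → y i + v i.natPred + L j < y j + v j.natPred := by
  let d : ℕ → ℤ := fun n => ∑ k ∈ Finset.range n, c k.succPNat
  have hd : ∀ i : ℕ+, d i - d i.natPred = c i := by
    intro i
    have hsum := Finset.sum_range_succ_sub_sum (n := i.natPred) fun k => c k.succPNat
    rwa [i.natPred_add_one, i.succPNat_natPred] at hsum
  obtain ⟨N, hN₀, hNmono, hN⟩ := exists_monotone_rapid_growth
    (fun n => (d n).natAbs + (d (n - 1)).natAbs) fun n => L n.toPNat'
  refine ⟨fun n => N n + (d n).toNat, fun n => N n + (-d n).toNat, ?_, ?_, ?_, ?_⟩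
  · simp [hN₀, d]
  · simp [hN₀, d]
  · intro i
    rw [← hd i]
    dsimp only
    omega
  · intro i j hij
    have hij' := hN i j ((PNat.coe_lt_coe i j).2 hij)
    have hNi : N i.natPred ≤ N i := hNmono (Nat.sub_le _ _)
    rw [PNat.coe_toPNat'] at hij'
    change 2 * N i + ((d i).natAbs + (d i.natPred).natAbs) + L j < N j at hij'
    dsimp only
    omega

end Growth

section Cases

variable {α ε : Ordinal.{u}} {g : Xsp α ≃ₜ Xsp α} {σ : Equiv.Perm ℕ+}
  {F₁ F₂ : ℕ+ → Set (OrdIcc ε)}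

lemma exists_exchangeSizes_zero {g : Xsp (0 : Ordinal.{u}) ≃ₜ Xsp 0}
    (hg : ∀ i, g (pt 0 i) = pt 0 (σ i))
    (hF₁ : ∀ i, F₁ i ∩ cbDeriv (OrdIcc ε) 0 = ∅) (hF₂ : ∀ i, F₂ i ∩ cbDeriv (OrdIcc ε) 0 = ∅) :
    ∃ s : ExchangeSizes.{u} 0, ∀ i, PairSim ↥(s.block (σ i) \ g '' s.block i)
      ↥(g '' s.block i \ s.block (σ i)) (F₁ i) (F₂ i) := by
  simp only [cbDeriv_zero, inter_univ] at hF₁ hF₂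
  let s : ExchangeSizes.{u} 0 :=
    ⟨fun _ => 0, fun _ => 0, rfl, rfl, fun _ => by simp, fun _ => by simp⟩
  have hs : ∀ i, s.block i = {pt 0 i} := by
    simpa only [cbDeriv_zero, inter_univ] using s.block_inter_cbDeriv_self
  refine ⟨s, fun i => ?_⟩
  rw [hs, hs, image_singleton, hg, sdiff_self, hF₁, hF₂]
  exact ⟨Homeomorph.empty⟩

lemma exists_exchangeSizes_add_one {β : Ordinal.{u}} {g : Xsp (β + 1) ≃ₜ Xsp (β + 1)}
    (hg : ∀ i, g (pt (β + 1) i) = pt (β + 1) (σ i)) (hσ : ∀ i (k : ℤ), (σ ^ k) i = i → k = 0)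
    (hF₁ : ∀ i, IsClopen (F₁ i)) (hF₂ : ∀ i, IsClopen (F₂ i))
    (hF₁' : ∀ i, F₁ i ∩ cbDeriv (OrdIcc ε) (β + 1) = ∅)
    (hF₂' : ∀ i, F₂ i ∩ cbDeriv (OrdIcc ε) (β + 1) = ∅) :
    ∃ s : ExchangeSizes (β + 1), ∀ i, PairSim ↥(s.block (σ i) \ g '' s.block i)
      ↥(g '' s.block i \ s.block (σ i)) (F₁ i) (F₂ i) := by
  have hne : ∀ i, σ i ≠ i := fun i hi => one_ne_zero (hσ i 1 hi)
  obtain ⟨c, hc⟩ := exists_apply_eq_add hσ fun i => (cbCount β (F₁ i) : ℤ) - cbCount β (F₂ i) -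
    cbIndex β (Ablock (β + 1) (σ i)) (g '' Ablock (β + 1) i)
  obtain ⟨y, v, hy₀, hv₀, hyv, hgrowth⟩ := exists_counts c fun i =>
    cbCount β (g '' Ablock (β + 1) (σ.symm i) \ Ablock (β + 1) i) +
      cbCount β (Ablock (β + 1) (σ i) \ g '' Ablock (β + 1) i)
  let s : ExchangeSizes (β + 1) :=
    ⟨fun n => ω ^ β * y n, fun n => ω ^ β * v n, by simp [hy₀], by simp [hv₀],
      fun n => opow_mul_lt_opow (natCast_lt_omega0 (y n)) (lt_add_one β),
      fun n => opow_mul_lt_opow (natCast_lt_omega0 (v n)) (lt_add_one β)⟩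
  have hdown : ∀ n, cbCount β (s.downSet n) = y n := fun n =>
    (s.cbCount_downSet n).trans (ncard_cbDeriv_opow_mul β (y n))
  have hup : ∀ n, cbCount β (s.upSet n) = v n := fun n =>
    (s.cbCount_upSet n).trans (ncard_cbDeriv_opow_mul β (v n))
  refine ⟨s, fun i => s.pairSim_block (hF₁ i) (hF₂ i) (hF₁' i) (hF₂' i)
    (Ablock_inter_cbDeriv_eq_image (hg i)) (fun n _ => ⟨s.down_lt n, s.up_lt n⟩) ?_ ?_⟩
  · simp only [hdown, hup, hyv, hc, add_sub_cancel_left]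
  · simp only [hdown, hup]
    rcases (hne i).lt_or_gt with hlt | hgt
    · have := hgrowth _ _ hlt
      omega
    · have := hgrowth _ _ hgt
      rw [σ.symm_apply_apply] at this
      omega

lemma exists_strictMono_lt_of_isSuccLimit (hα : Order.IsSuccLimit α) {e : ℕ → Ordinal.{u}}
    (he : ∀ n, e n < α) :
    ∃ τ : ℕ → Ordinal.{u}, StrictMono τ ∧ (∀ n, τ n < α) ∧ ∀ n, e n ≤ τ n := by
  let τ : ℕ → Ordinal.{u} := Nat.rec (e 0) fun n t => max (t + 1) (e (n + 1))
  refine ⟨τ, strictMono_nat_of_lt_succ fun n => ?_, fun n => ?_, fun n => ?_⟩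
  · exact (lt_add_one (τ n)).trans_le (le_max_left _ _)
  · induction n with
    | zero => exact he 0
    | succ n ih => exact max_lt (hα.add_one_lt ih) (he (n + 1))
  · cases n with
    | zero => exact le_rfl
    | succ n => exact le_max_right _ _

lemma exists_lt_agree_of_isSuccLimit (hα : Order.IsSuccLimit α) {E E' : Set (Xsp α)}
    {F₁ F₂ : Set (OrdIcc ε)} (hE : IsClopen E) (hE' : IsClopen E') (hF₁ : IsClopen F₁)
    (hF₂ : IsClopen F₂) (h : E ∩ cbDeriv (Xsp α) α = E' ∩ cbDeriv (Xsp α) α)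
    (hF₁' : F₁ ∩ cbDeriv (OrdIcc ε) α = ∅) (hF₂' : F₂ ∩ cbDeriv (OrdIcc ε) α = ∅) :
    ∃ β < α, ∀ γ, β ≤ γ → (E \ E') ∩ cbDeriv (Xsp α) γ = ∅ ∧ (E' \ E) ∩ cbDeriv (Xsp α) γ = ∅ ∧
      F₁ ∩ cbDeriv (OrdIcc ε) γ = ∅ ∧ F₂ ∩ cbDeriv (OrdIcc ε) γ = ∅ := by
  have mono : ∀ {X : Type (u + 1)} [TopologicalSpace X] {S : Set X} {β γ : Ordinal.{u}}, β ≤ γ →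
      S ∩ cbDeriv X β = ∅ → S ∩ cbDeriv X γ = ∅ := fun hβγ hS =>
    subset_empty_iff.1 (hS ▸ inter_subset_inter_right _ (cbDeriv_antitone hβγ))
  obtain ⟨β₁, hβ₁, h₁⟩ := exists_lt_inter_cbDeriv_eq_empty hα (hE.diff hE').isClosed
    (diff_inter_cbDeriv_eq_empty h)
  obtain ⟨β₂, hβ₂, h₂⟩ := exists_lt_inter_cbDeriv_eq_empty hα (hE'.diff hE).isClosed
    (diff_inter_cbDeriv_eq_empty h.symm)
  obtain ⟨β₃, hβ₃, h₃⟩ := exists_lt_inter_cbDeriv_eq_empty hα hF₁.isClosed hF₁'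
  obtain ⟨β₄, hβ₄, h₄⟩ := exists_lt_inter_cbDeriv_eq_empty hα hF₂.isClosed hF₂'
  refine ⟨max (max β₁ β₂) (max β₃ β₄), max_lt (max_lt hβ₁ hβ₂) (max_lt hβ₃ hβ₄), fun γ hγ => ?_⟩
  simp only [sup_le_iff] at hγ
  exact ⟨mono hγ.1.1 h₁, mono hγ.1.2 h₂, mono hγ.2.1 h₃, mono hγ.2.2 h₄⟩

lemma exists_levels_of_isSuccLimit (hα : Order.IsSuccLimit α)
    (hg : ∀ i, g (pt α i) = pt α (σ i)) (hF₁ : ∀ i, IsClopen (F₁ i)) (hF₂ : ∀ i, IsClopen (F₂ i))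
    (hF₁' : ∀ i, F₁ i ∩ cbDeriv (OrdIcc ε) α = ∅) (hF₂' : ∀ i, F₂ i ∩ cbDeriv (OrdIcc ε) α = ∅) :
    ∃ τ : ℕ → Ordinal.{u}, StrictMono τ ∧ (∀ n, τ n < α) ∧ ∀ (i : ℕ+) γ, τ (max i (σ i)) ≤ γ →
      (Ablock α (σ i) \ g '' Ablock α i) ∩ cbDeriv (Xsp α) γ = ∅ ∧
      (g '' Ablock α i \ Ablock α (σ i)) ∩ cbDeriv (Xsp α) γ = ∅ ∧
      F₁ i ∩ cbDeriv (OrdIcc ε) γ = ∅ ∧ F₂ i ∩ cbDeriv (OrdIcc ε) γ = ∅ := by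
  have hgA : ∀ i, IsClopen (g '' Ablock α i) := fun i =>
    ⟨g.isClosedMap _ (isClopen_Ablock i).isClosed, g.isOpenMap _ (isClopen_Ablock i).isOpen⟩
  choose e he hagree using fun i => exists_lt_agree_of_isSuccLimit hα (isClopen_Ablock (σ i))
    (hgA i) (hF₁ i) (hF₂ i) (Ablock_inter_cbDeriv_eq_image (hg i)) (hF₁' i) (hF₂' i)
  obtain ⟨τ, hτ, hτα, heτ⟩ := exists_strictMono_lt_of_isSuccLimit hα
    (e := fun n => max (e n.toPNat') (e (σ.symm n.toPNat'))) fun n => max_lt (he _) (he _)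
  refine ⟨τ, hτ, hτα, fun i γ hγ => hagree i γ (le_trans ?_ hγ)⟩
  rcases max_choice (i : ℕ) (σ i) with h | h
  · simpa only [h, PNat.coe_toPNat'] using (le_max_left _ _).trans (heτ i)
  · simpa only [h, PNat.coe_toPNat', σ.symm_apply_apply] using (le_max_right _ _).trans (heτ (σ i))

lemma exists_exchangeSizes_of_isSuccLimit (hα : Order.IsSuccLimit α)
    (hg : ∀ i, g (pt α i) = pt α (σ i)) (hσ : ∀ i, σ i ≠ i)
    (hF₁ : ∀ i, IsClopen (F₁ i)) (hF₂ : ∀ i, IsClopen (F₂ i))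
    (hF₁' : ∀ i, F₁ i ∩ cbDeriv (OrdIcc ε) α = ∅) (hF₂' : ∀ i, F₂ i ∩ cbDeriv (OrdIcc ε) α = ∅) :
    ∃ s : ExchangeSizes α, ∀ i, PairSim ↥(s.block (σ i) \ g '' s.block i)
      ↥(g '' s.block i \ s.block (σ i)) (F₁ i) (F₂ i) := by
  obtain ⟨τ, hτ, hτα, hagree⟩ := exists_levels_of_isSuccLimit hα hg hF₁ hF₂ hF₁' hF₂'
  let s : ExchangeSizes α := ⟨fun n => ω ^ τ n * n, fun n => ω ^ τ n * n, by simp, by simp,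
    fun n => opow_mul_lt_opow (natCast_lt_omega0 n) (hτα n),
    fun n => opow_mul_lt_opow (natCast_lt_omega0 n) (hτα n)⟩
  have count_up : ∀ γ n, cbCount γ (s.upSet n) = cbCount γ (s.downSet n) := fun γ n =>
    (s.cbCount_upSet n).trans (s.cbCount_downSet n).symm
  have count_lt : ∀ {n M}, n < M → cbCount (τ M) (s.downSet n) = 0 := fun h =>
    cbCount_eq_zero (s.downSet_inter_cbDeriv (opow_mul_lt_opow (natCast_lt_omega0 _) (hτ h)))
  have count_self : ∀ M, cbCount (τ M) (s.downSet M) = M := fun M =>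
    (s.cbCount_downSet M).trans (ncard_cbDeriv_opow_mul (τ M) M)
  refine ⟨s, fun i => ?_⟩
  obtain ⟨hAg, hgA, hF₁e, hF₂e⟩ := hagree i _ le_rfl
  obtain ⟨hAg', hgA', hF₁e', hF₂e'⟩ := hagree i _ (le_add_of_nonneg_right zero_le_one)
  refine s.pairSim_block (hF₁ i) (hF₂ i) hF₁e' hF₂e' (inter_cbDeriv_eq_of_diff hAg' hgA')
    (fun n hn => and_self_iff.2 <| opow_mul_lt_opow (natCast_lt_omega0 n)
      (Order.lt_add_one_iff.2 (hτ.monotone hn))) ?_ ?_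
  · simp only [count_up, cbIndex, cbCount_eq_zero hAg, cbCount_eq_zero hgA, cbCount_eq_zero hF₁e,
      cbCount_eq_zero hF₂e, _root_.sub_self]
  · simp only [count_up, cbCount_eq_zero hAg, cbCount_eq_zero hgA, add_zero]
    rcases (hσ i).lt_or_gt with h | h
    · have hlt : (σ i : ℕ) < i := h
      rw [max_eq_left hlt.le, count_self, count_lt hlt, count_lt ((natPred_le_coe _).trans_lt hlt)]
      exact Or.inr (Nat.add_pos_left i.pos _)
    · have hlt : (i : ℕ) < σ i := h
      rw [max_eq_right hlt.le, count_self, count_lt hlt, count_lt ((natPred_le_coe _).trans_lt hlt)]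
      exact Or.inl (Nat.add_pos_left (σ i).pos _)

end Cases

theorem pair_data_realized_by_conjugate_general (α : Ordinal)
    (π : (Xsp α ≃ₜ Xsp α) → Equiv.Perm ℕ+) (hπ : IsBlockPerm α π) (g : Xsp α ≃ₜ Xsp α)
    (horbit : ∀ (i : ℕ+) (k : ℤ), ((π g) ^ k) i = i → k = 0)
    (f : ℕ+ → Set (OrdIcc (omega0 ^ α)) × Set (OrdIcc (omega0 ^ α)))
    (hf : ∀ i : ℕ+, IsClopen (f i).1 ∧ IsClopen (f i).2 ∧
      (∃ x : Ordinal, x < omega0 ^ α ∧ ∀ y ∈ (f i).1, (y : Ordinal) ≤ x) ∧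
      (∃ x : Ordinal, x < omega0 ^ α ∧ ∀ y ∈ (f i).2, (y : Ordinal) ≤ x)) :
    ∃ h : Xsp α ≃ₜ Xsp α, π h = 1 ∧ ∀ i : ℕ+,
      PairSim ↥(Pset α π ((h.trans g).trans h.symm) i)
        ↥(Qset α π ((h.trans g).trans h.symm) i) ↥((f i).1) ↥((f i).2) := by
  have hF₁ : ∀ i, IsClopen (f i).1 := fun i => (hf i).1
  have hF₂ : ∀ i, IsClopen (f i).2 := fun i => (hf i).2.1
  have hF₁' := fun i => inter_cbDeriv_eq_empty_of_bounded (hf i).2.2.1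
  have hF₂' := fun i => inter_cbDeriv_eq_empty_of_bounded (hf i).2.2.2
  suffices ∃ s : ExchangeSizes α, ∀ i, PairSim ↥(s.block (π g i) \ g '' s.block i)
      ↥(g '' s.block i \ s.block (π g i)) (f i).1 (f i).2 from
    this.elim fun s hs => s.exists_conj_pairSim hπ hs
  rcases zero_or_succ_or_isSuccLimit α with rfl | ⟨β, rfl⟩ | hα
  · exact exists_exchangeSizes_zero (hπ g) hF₁' hF₂'
  · exact exists_exchangeSizes_add_one (hπ g) horbit hF₁ hF₂ hF₁' hF₂'
  · exact exists_exchangeSizes_of_isSuccLimit hα (hπ g) (fun i hi => one_ne_zero (horbit i 1 hi))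
      hF₁ hF₂ hF₁' hF₂'

end

/-- If `σ = π(g)` acts on `{1,2,…}` as a single infinite cycle, and `f`
assigns to each `i ≥ 1` an ordered pair of bounded clopen subsets of `[1, ω^α]`, then there
is `h` in the kernel of `π` with `(P_i(h⁻¹gh), Q_i(h⁻¹gh)) ∼ f(i)` for every `i`.
(The conjugate `h⁻¹gh`, acting by `x ↦ h⁻¹(g(h(x)))`, is `(h.trans g).trans h.symm`.) -/
theorem pair_data_realized_by_conjugate (α : Ordinal) (hα : α.card ≤ Cardinal.aleph0)
    (π : (Xsp α ≃ₜ Xsp α) → Equiv.Perm ℕ+) (hπ : IsBlockPerm α π)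
    (g : Xsp α ≃ₜ Xsp α)
    (hcycle : ∀ m n : ℕ+, ∃ j : ℤ, ((π g) ^ j) m = n)
    (f : ℕ+ → Set (OrdIcc (omega0 ^ α)) × Set (OrdIcc (omega0 ^ α)))
    (hf : ∀ i : ℕ+, IsClopen (f i).1 ∧ IsClopen (f i).2 ∧
      (∃ x : Ordinal, x < omega0 ^ α ∧ ∀ y ∈ (f i).1, (y : Ordinal) ≤ x) ∧
      (∃ x : Ordinal, x < omega0 ^ α ∧ ∀ y ∈ (f i).2, (y : Ordinal) ≤ x)) :
    ∃ h : Xsp α ≃ₜ Xsp α, π h = 1 ∧ ∀ i : ℕ+,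
      PairSim ↥(Pset α π ((h.trans g).trans h.symm) i)
        ↥(Qset α π ((h.trans g).trans h.symm) i) ↥((f i).1) ↥((f i).2) :=
  pair_data_realized_by_conjugate_general α π hπ g (eq_zero_of_zpow_apply_eq_self hcycle) f hf
end
end

section
/- If α and β are successor ordinals, then the ordinal α + β and the ordinal β + α (ordinal addition), each regarded as the set of ordinals below it equipped with the order topology, are homeomorphic topological spaces. -/
open Ordinal Topology

/-!
A clopen initial segment splits off as a topological summand: if `Ici a` is open, then `Iio (a + b)`
is the disjoint union of the open pieces `Iio a` and `Ico a (a + b)`, and left translation by `a`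
identifies the latter with `Iio b`. Disjoint unions commute up to homeomorphism even though addition
does not. For a successor ordinal `γ + 1`, the set `Ici (γ + 1) = Ioi γ` is open.
-/

section CanonicallyOrderedAdd

open Set

variable {M : Type*} [Add M]

theorem range_const_add_eq_Ici [Preorder M] [CanonicallyOrderedAdd M] (a : M) :
    range (a + ·) = Ici a := by
  ext x
  simp only [mem_range, mem_Ici, le_iff_exists_add, eq_comm]

variable [LinearOrder M] [CanonicallyOrderedAdd M] [AddLeftStrictMono M]

theorem image_const_add_Iio_eq_Ico (a b : M) : (a + ·) '' Iio b = Ico a (a + b) := by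
  have preimage_Iio : (a + ·) ⁻¹' Iio (a + b) = Iio b := by
    ext x
    exact add_right_strictMono.lt_iff_lt
  rw [← preimage_Iio, image_preimage_eq_range_inter, range_const_add_eq_Ici, Ici_inter_Iio]

/-- The identity on `Iio a` glued with left translation by `a` on `Iio b`. -/
def sumIioToAdd (a b : M) : Iio a ⊕ Iio b → M :=
  Sum.elim Subtype.val fun x => a + x

theorem sumIioToAdd_injective (a b : M) : Function.Injective (sumIioToAdd a b) :=
  Subtype.val_injective.sumElim
    (add_right_strictMono.injective.comp Subtype.val_injective)
    fun x _ => (x.2.trans_le le_self_add).ne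

theorem range_sumIioToAdd (a b : M) : range (sumIioToAdd a b) = Iio (a + b) := by
  have range_right : range (fun x : Iio b => a + x) = Ico a (a + b) := by
    rw [← image_const_add_Iio_eq_Ico, image_eq_range]
  rw [sumIioToAdd, Sum.elim_range, Subtype.range_coe, range_right,
    Iio_union_Ico_eq_Iio le_self_add]

variable [TopologicalSpace M] [OrderTopology M]

theorem isOpenEmbedding_const_add {a : M} (ha : IsOpen (Ici a)) : IsOpenEmbedding (a + ·) where
  toIsEmbedding := add_right_strictMono.isEmbedding_of_ordConnected <| by
    rw [range_const_add_eq_Ici]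
    exact ordConnected_Ici
  isOpen_range := range_const_add_eq_Ici a ▸ ha

theorem isOpenEmbedding_sumIioToAdd {a : M} (ha : IsOpen (Ici a)) (b : M) :
    IsOpenEmbedding (sumIioToAdd a b) :=
  isOpen_Iio.isOpenEmbedding_subtypeVal.sumElim
    ((isOpenEmbedding_const_add ha).comp isOpen_Iio.isOpenEmbedding_subtypeVal)
    (sumIioToAdd_injective a b)

/-- The decomposition of `Iio (a + b)` as a topological sum, for `Iio a` clopen. -/
noncomputable def sumIioHomeomorphIioAdd {a : M} (ha : IsOpen (Ici a)) (b : M) :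
    Iio a ⊕ Iio b ≃ₜ Iio (a + b) :=
  (isOpenEmbedding_sumIioToAdd ha b).toHomeomorph.trans <|
    Homeomorph.setCongr (range_sumIioToAdd a b)

theorem add_comm_homeomorph_of_succ_general {a b : M} (ha : IsOpen (Ici a)) (hb : IsOpen (Ici b)) :
    Nonempty (Iio (a + b) ≃ₜ Iio (b + a)) :=
  ⟨(sumIioHomeomorphIioAdd ha b).symm.trans <|
    (Homeomorph.sumComm _ _).trans (sumIioHomeomorphIioAdd hb a)⟩

end CanonicallyOrderedAdd

theorem isOpen_Ici_add_one {M : Type*} [LinearOrder M] [Add M] [One M] [SuccAddOrder M]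
    [NoMaxOrder M] [TopologicalSpace M] [ClosedIicTopology M] (a : M) :
    IsOpen (Set.Ici (a + 1)) :=
  Set.Ici_add_one_eq_Ioi a ▸ isOpen_Ioi

/-- If `α` and `β` are successor ordinals, then `α + β` and `β + α`
(each regarded as the set of ordinals below it, with the order topology, i.e. the subspace
topology induced from the order topology on `Ordinal`) are homeomorphic. -/
theorem add_comm_homeomorph_of_succ (α β : Ordinal)
    (hα : ∃ γ, α = γ + 1) (hβ : ∃ γ, β = γ + 1) :
    Nonempty (↥(Set.Iio (α + β)) ≃ₜ ↥(Set.Iio (β + α))) := by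
  obtain ⟨γ, rfl⟩ := hα
  obtain ⟨δ, rfl⟩ := hβ
  exact add_comm_homeomorph_of_succ_general (isOpen_Ici_add_one γ) (isOpen_Ici_add_one δ)
end
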